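/- Let d > 3 be an integer, ε ≠ 0 and τ ∈ ℝ. Let V : ℝ^d → ℝ be nonnegative, continuously differentiable away from the origin, and suppose there exist γ > 0 and η > 0 such that γ·V(x) + |x|·∂_rV(x) ≤ (1−η)(d−1)(d−3)/(2|x|²) for all x ≠ 0. If u is a classical solution of −Δu + V u ± iεu − τu = f on ℝ^d with u, ∇u ∈ L²(ℝ^d) and f ∈ L²(ℝ^d), then ‖∇u‖²_X + max{0,τ}·‖u‖²_X + (d−3)∫_{ℝ^d} |u(x)|²/|x|³ dx + ∫_{ℝ^d} (V(x)/|x|)|u(x)|² dx + sup_{R>0} R^{−3}∫_{B(0,R)} |u(x)|² dx ≤ C‖f‖²_{X*}, where C depends only on d, γ, η and is independent of ε and τ. -/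

import Mathlib

/-!
The estimate is proved by the Morawetz multiplier method, written for the real and imaginary parts
`v`, `z` of `u` and `p`, `q` of `f` (structure `Sol`; the sign `±` is absorbed into `ε`).

Every integration by parts goes through `lintegral_le_of_le_add_div`: if `H ≥ 0` and
`H ≤ Q + div P` away from the origin, with `Q` and `P / |x|` integrable, then `∫ H ≤ ∫ Q`. Cutoffs
at the origin and at infinity have gradient `O(1/|x|)`, so they disappear in the limit; integrability
of `H` is a conclusion, which is how `∫ V|u|²` is seen to be finite.

With the weight `a = (δ² + |x|²)^{-1/2}`, multiplying the equation by `a x·∇u + b u` for a suitable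
`b` and using the repulsivity condition gives (`Sol.morawetz`)
`∫ δ²a³|∇u|² + (γ/2)∫ aV|u|² + ηκ ∫ a|u|²/|x|² ≤ G + κ ∫ (a/|x|² - a³)|u|²`,
where `κ = (d-1)(d-3)/4` and `G = ∫ |f||∇u| + (d/2)∫ |f||u|/|x| + |ε| ∫ |u||∇u|` (`Sol.rhs`).
Letting `δ → 0` removes the last integral and bounds `∫ V|u|²/|x|` and `∫ |u|²/|x|³` by `G`
(`Sol.hardy`). Taking `δ = R`, where `δ²a³` is at least `1/(3R)` on the ball of radius `R`, bounds
`‖∇u‖²_X` by `G`, because `κ ∫ |u|²/|x|³` is already controlled. The real and imaginary parts of the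
equation multiplied by `δ²a³ ū` then bound `(max 0 τ + |ε|) ‖u‖²_X` by `G` (`Sol.tau_ew`,
`Sol.eps_ew`).

It remains to bound `G`. The global charge and energy estimates give
`|ε| ∫ |u||∇u| ≤ λ ∫ |f||u|` with `λ² = max 0 τ + |ε|` (`Sol.eps_term`), so each term of `G` is of
the form `∫ |f| w` with `‖w‖²_X ≤ C G`. The duality of `X` and `X*` (`duality`) yields
`G ≤ C ‖f‖_{X*} √G`, and since `G` is finite, `G ≤ C² ‖f‖²_{X*}` (`Sol.rhs_le`).
-/

noncomputable section
open MeasureTheory Metric Set ENNReal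

abbrev Ed (d : ℕ) := EuclideanSpace ℝ (Fin d)

/-- partial derivative of a complex valued function -/
def pd {d : ℕ} (u : Ed d → ℂ) (i : Fin d) (x : Ed d) : ℂ :=
  fderiv ℝ u x (EuclideanSpace.single i 1)

/-- Laplacian of a complex valued function -/
def lap {d : ℕ} (u : Ed d → ℂ) (x : Ed d) : ℂ :=
  ∑ i, fderiv ℝ (pd u i) x (EuclideanSpace.single i 1)

/-- squared norm of the gradient, as an extended nonnegative real -/
def gradSq {d : ℕ} (u : Ed d → ℂ) (x : Ed d) : ℝ≥0∞ :=
  ∑ i, (‖pd u i x‖₊ : ℝ≥0∞) ^ 2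

/-- |u(x)|² as an extended nonnegative real -/
def usq {d : ℕ} (u : Ed d → ℂ) (x : Ed d) : ℝ≥0∞ := (‖u x‖₊ : ℝ≥0∞) ^ 2

/-- radial derivative ∂_r V (x) = (x/|x|)·∇V(x) -/
def radialDeriv {d : ℕ} (V : Ed d → ℝ) (x : Ed d) : ℝ :=
  fderiv ℝ V x x / ‖x‖

/-- Morrey–Campanato type quantity sup_{R>0} (1/R) ∫_{B(0,R)} g -/
def nX2 {d : ℕ} (g : Ed d → ℝ≥0∞) : ℝ≥0∞ :=
  ⨆ (R : ℝ) (_ : 0 < R), (ENNReal.ofReal R)⁻¹ * ∫⁻ x in ball (0 : Ed d) R, g x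

/-- dyadic shell C_j -/
def shell (d : ℕ) (j : ℤ) : Set (Ed d) := {x | (2:ℝ)^j < ‖x‖ ∧ ‖x‖ ≤ (2:ℝ)^(j+1)}

/-- the dual norm ‖f‖_{X*} applied to g = |f|² -/
def nXstar {d : ℕ} (g : Ed d → ℝ≥0∞) : ℝ≥0∞ :=
  ∑' j : ℤ, (ENNReal.ofReal ((2:ℝ)^(j+1)) * ∫⁻ x in shell d j, g x) ^ (1/2 : ℝ)

/-- the index j₀ with 2^{j₀} < ρ ≤ 2^{j₀+1} -/
def jIdx (ρ : ℝ) : ℤ := ⌈Real.logb 2 ρ⌉ - 1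

/-- sup_{R ≥ ρ} (1/R)∫_{B(0,R)} g -/
def nX2r {d : ℕ} (ρ : ℝ) (g : Ed d → ℝ≥0∞) : ℝ≥0∞ :=
  ⨆ (R : ℝ) (_ : ρ ≤ R), (ENNReal.ofReal R)⁻¹ * ∫⁻ x in ball (0 : Ed d) R, g x

/-- the dual norm ‖f‖_{X*_ρ} applied to g = |f|² -/
def nXstarr {d : ℕ} (ρ : ℝ) (g : Ed d → ℝ≥0∞) : ℝ≥0∞ :=
  (∑' j : {j : ℤ // jIdx ρ ≤ j},
    (ENNReal.ofReal ((2:ℝ)^((j:ℤ)+1)) * ∫⁻ x in shell d (j:ℤ), g x) ^ (1/2 : ℝ))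
  + (ENNReal.ofReal ρ * ∫⁻ x in ball (0 : Ed d) ρ, g x) ^ (1/2 : ℝ)

/-- integral of g over the sphere of radius R w.r.t. (d-1)-dimensional Hausdorff measure -/
def sphInt {d : ℕ} (R : ℝ) (g : Ed d → ℝ≥0∞) : ℝ≥0∞ :=
  ∫⁻ x in Metric.sphere (0 : Ed d) R, g x ∂(μH[(d:ℝ) - 1])


/-! ### Integration against a divergence -/

/-- The partial derivative of a real valued function. -/
def dd {d : ℕ} (v : Ed d → ℝ) (i : Fin d) (x : Ed d) : ℝ :=
  fderiv ℝ v x (EuclideanSpace.single i 1)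

/-- The singular weight `|x|⁻³` is locally integrable since `d > 3`. -/
lemma integrable_div_norm_cube {d : ℕ} (hd : 3 < d) {h : Ed d → ℝ} (hc : Continuous h)
    (hi : Integrable h) : Integrable (fun x => h x / ‖x‖ ^ 3) := by
  have hm : AEStronglyMeasurable (fun x => h x / ‖x‖ ^ 3) (volume : Measure (Ed d)) :=
    (hc.measurable.div (by fun_prop)).aestronglyMeasurable
  have hfr : Module.finrank ℝ (Ed d) = d := by simp
  have h1 : IntegrableOn (fun x => h x / ‖x‖ ^ 3) (ball (0 : Ed d) 1) := by
    obtain ⟨C, hC⟩ := (isCompact_closedBall (0 : Ed d) 1).exists_bound_of_continuousOn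
      hc.continuousOn
    refine integrableOn_ball_of_norm_le_rpow (C := C) (α := 3) (by rw [hfr]; omega)
      (by rw [hfr]; exact_mod_cast hd) ?_ hm
    rw [ae_restrict_iff' measurableSet_ball]
    refine .of_forall fun x hx => ?_
    have : ‖x‖ ^ (-3 : ℝ) = (‖x‖ ^ 3)⁻¹ := by
      rw [Real.rpow_neg (norm_nonneg x)]; norm_cast
    rw [this, norm_div, div_eq_mul_inv]
    have h3 : ‖(‖x‖ ^ 3)‖ = ‖x‖ ^ 3 := by simp
    rw [h3]
    exact mul_le_mul_of_nonneg_right (hC x (ball_subset_closedBall hx)) (by positivity)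
  have h2 : IntegrableOn (fun x => h x / ‖x‖ ^ 3) (ball (0 : Ed d) 1)ᶜ := by
    refine Integrable.mono' hi.norm.integrableOn hm.restrict ?_
    rw [ae_restrict_iff' measurableSet_ball.compl]
    refine .of_forall fun x hx => ?_
    have hx1 : 1 ≤ ‖x‖ := by simpa using hx
    rw [norm_div]
    refine div_le_self (norm_nonneg _) ?_
    simpa using one_le_pow₀ hx1
  rw [← integrableOn_univ, ← union_compl_self (ball (0 : Ed d) 1)]
  exact h1.union h2

/-- Integral of a partial derivative of a compactly supported `C¹` function. -/
lemma integral_dd_eq_zero {d : ℕ} {F : Ed d → ℝ} (hF : ContDiff ℝ 1 F)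
    (hs : HasCompactSupport F) (i : Fin d) :
    Integrable (dd F i) ∧ ∫ x, dd F i x = 0 := by
  have hc : Continuous (dd F i) := (hF.continuous_fderiv (by norm_num)).clm_apply continuous_const
  have hs' : HasCompactSupport (dd F i) :=
    (hs.fderiv (𝕜 := ℝ)).comp_left (g := fun L : Ed d →L[ℝ] ℝ => L (EuclideanSpace.single i 1))
      (by simp)
  have hi := hc.integrable_of_hasCompactSupport hs' (μ := volume)
  refine ⟨hi, ?_⟩
  have := integral_mul_fderiv_eq_neg_fderiv_mul_of_integrable (𝕜 := ℝ) (μ := (volume : Measure (Ed d)))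
    (f := fun _ => (1:ℝ)) (g := F) (v := EuclideanSpace.single i 1)
    (by simp) (by simp only [one_mul]; exact hi)
    (by simpa using hF.continuous.integrable_of_hasCompactSupport hs)
    (fun x _ => by fun_prop) (fun x _ => (hF.differentiable (by norm_num)).differentiableAt)
  simpa [dd] using this

/-- Line derivative form of the partial derivative. -/
lemma dd_eq_of_hasDerivAt {d : ℕ} {v : Ed d → ℝ} {i : Fin d} {x : Ed d} {v' : ℝ}
    (hv : DifferentiableAt ℝ v x)
    (h : HasDerivAt (fun t : ℝ => v (x + t • EuclideanSpace.single i 1)) v' 0) :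
    dd v i x = v' := by
  have h1 := hv.lineDeriv_eq_fderiv (v := EuclideanSpace.single i 1)
  have h2 : HasLineDerivAt ℝ v v' x (EuclideanSpace.single i 1) := h
  rw [dd, ← h1, h2.lineDeriv]

lemma hasDerivAt_line {d : ℕ} {v : Ed d → ℝ} {x : Ed d} (hv : DifferentiableAt ℝ v x)
    (i : Fin d) :
    HasDerivAt (fun t : ℝ => v (x + t • EuclideanSpace.single i 1)) (dd v i x) 0 :=
  hv.hasFDerivAt.hasLineDerivAt _

lemma hasDerivAt_congr {f g : ℝ → ℝ} {f' g' t : ℝ} (h : HasDerivAt f f' t)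
    (hf : ∀ s, g s = f s) (hg : g' = f') : HasDerivAt g g' t := by
  have : g = f := funext hf
  rw [this, hg]; exact h

lemma hasDerivAt_line_norm_sq {d : ℕ} (x : Ed d) (i : Fin d) :
    HasDerivAt (fun t : ℝ => ‖x + t • EuclideanSpace.single i 1‖ ^ 2) (2 * x i) 0 := by
  have h : HasDerivAt (fun t : ℝ => ‖x‖ ^ 2 + 2 * (t * x i) + t ^ 2) (2 * x i) 0 := by
    have h1 := (((hasDerivAt_id (0:ℝ)).mul_const (x i)).const_mul 2).const_add (‖x‖ ^ 2)
    have h2 := h1.add ((hasDerivAt_id (0:ℝ)).pow 2)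
    exact hasDerivAt_congr h2 (fun s => by simp) (by simp)
  refine hasDerivAt_congr h (fun t => ?_) rfl
  rw [@norm_add_sq_real, inner_smul_right, EuclideanSpace.inner_single_right, norm_smul]
  simp

lemma hasDerivAt_line_coord {d : ℕ} (x : Ed d) (i : Fin d) (j : Fin d) :
    HasDerivAt (fun t : ℝ => (x + t • EuclideanSpace.single i (1:ℝ)) j)
      (if j = i then 1 else 0) 0 := by
  have h1 := ((hasDerivAt_id (0:ℝ)).mul_const ((EuclideanSpace.single i (1:ℝ) : Ed d) j)).const_add
    (x j)
  exact hasDerivAt_congr h1 (fun s => by simp) (by simp)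

/-- Logarithmic cutoffs `Φ (log |x|² / n)`: they tend to `1` off the origin, vanish near the origin
and near infinity, and their gradients are at most `K / (n |x|)`. -/
lemma exists_cutoff (d : ℕ) : ∃ (K : ℝ) (χ : ℕ → Ed d → ℝ), 0 ≤ K ∧
    (∀ n, ContDiffOn ℝ 1 (χ n) {0}ᶜ) ∧ (∀ n x, 0 ≤ χ n x ∧ χ n x ≤ 1) ∧
    (∀ n, Measurable (χ n)) ∧
    (∀ n, ∃ r > 0, ∀ x : Ed d, ‖x‖ < r → x ≠ 0 → χ n x = 0) ∧
    (∀ n, ∃ r > 0, ∀ x : Ed d, r < ‖x‖ → χ n x = 0) ∧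
    (∀ x : Ed d, ∀ᶠ n in Filter.atTop, χ n x = 1) ∧
    (∀ n x, x ≠ 0 → ∀ i, |dd (χ n) i x| ≤ K / ((n:ℝ) + 1) / ‖x‖) := by
  let Φ : ContDiffBump (0:ℝ) := ⟨1, 2, by norm_num, by norm_num⟩
  have hΦ : ContDiff ℝ 1 Φ := Φ.contDiff
  have hΦ0 : ∀ t : ℝ, 2 ≤ |t| → Φ t = 0 := fun t ht => Φ.zero_of_le_dist (by simpa using ht)
  have hΦ1 : ∀ t : ℝ, |t| ≤ 1 → Φ t = 1 := fun t ht =>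
    Φ.one_of_mem_closedBall (by simpa using ht)
  obtain ⟨K, hK⟩ := (hΦ.continuous_deriv (by norm_num)).bounded_above_of_compact_support
    Φ.hasCompactSupport.deriv
  have hK0 : 0 ≤ K := (norm_nonneg _).trans (hK 0)
  have hnp : ∀ n : ℕ, (0:ℝ) < (n:ℝ) + 1 := fun n => by positivity
  have hcd : ∀ n : ℕ, ∀ x : Ed d, x ≠ 0 →
      ContDiffAt ℝ 1 (fun x : Ed d => Φ (Real.log (‖x‖ ^ 2) / ((n:ℝ) + 1))) x := by
    intro n x hx
    refine hΦ.contDiffAt.comp x ?_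
    refine ContDiffAt.div_const ?_ _
    exact ContDiffAt.log (contDiff_norm_sq ℝ).contDiffAt (by positivity)
  refine ⟨2 * K, fun n x => Φ (Real.log (‖x‖ ^ 2) / (n + 1)), by positivity,
    fun n x hx => (hcd n x hx).contDiffWithinAt, fun n x => ⟨Φ.nonneg, Φ.le_one⟩,
    fun n => hΦ.continuous.measurable.comp (by fun_prop), fun n => ?_, fun n => ?_, fun x => ?_,
    fun n x hx i => ?_⟩
  · refine ⟨Real.exp (-(n + 1)), Real.exp_pos _, fun x hx hx0 => hΦ0 _ ?_⟩
    have hpos : 0 < ‖x‖ := norm_pos_iff.2 hx0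
    have h1 : Real.log ‖x‖ < -(n+1) := by
      rw [Real.log_lt_iff_lt_exp hpos]; exact hx
    rw [Real.log_pow, abs_div, abs_of_pos (hnp n), le_div_iff₀ (hnp n)]
    refine le_trans ?_ (neg_le_abs _)
    push_cast; linarith
  · refine ⟨Real.exp (n + 1), Real.exp_pos _, fun x hx => hΦ0 _ ?_⟩
    have hpos : 0 < ‖x‖ := (Real.exp_pos _).trans hx
    have h1 : (n+1:ℝ) < Real.log ‖x‖ := by
      rw [Real.lt_log_iff_exp_lt hpos]; exact hx
    rw [Real.log_pow, abs_div, abs_of_pos (hnp n), le_div_iff₀ (hnp n)]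
    refine le_trans ?_ (le_abs_self _)
    push_cast; linarith
  · obtain ⟨N, hN⟩ := exists_nat_ge |Real.log (‖x‖ ^ 2)|
    filter_upwards [Filter.eventually_ge_atTop N] with n hn
    refine hΦ1 _ ?_
    rw [abs_div, abs_of_pos (hnp n), div_le_one (hnp n)]
    have : (N:ℝ) ≤ n := by exact_mod_cast hn
    linarith
  · have hpos : 0 < ‖x‖ := norm_pos_iff.2 hx
    have hx2 : ‖x‖ ^ 2 ≠ 0 := by positivity
    have hlog : HasDerivAt (fun t : ℝ => Real.log (‖x + t • EuclideanSpace.single i 1‖ ^ 2)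
        / ((n:ℝ) + 1)) (2 * x i / ‖x‖ ^ 2 / ((n:ℝ) + 1)) 0 := by
      have := ((hasDerivAt_line_norm_sq x i).log (by simpa using hpos.ne')).div_const ((n:ℝ)+1)
      simpa using this
    have hh := (HasDerivAt.comp (h₂ := Φ) 0
      (hΦ.differentiable (by norm_num)).differentiableAt.hasDerivAt hlog)
    rw [dd_eq_of_hasDerivAt ((hcd n x hx).differentiableAt (by norm_num)) hh]
    have hxi : |x i| ≤ ‖x‖ := by simpa using PiLp.norm_apply_le x i
    rw [abs_mul, abs_div, abs_div, abs_mul, abs_of_pos (hnp n), abs_of_pos (by positivity : 0 < ‖x‖^2)]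
    have hd1 := hK (Real.log (‖x + (0:ℝ) • EuclideanSpace.single i 1‖ ^ 2) / ((n:ℝ) + 1))
    rw [Real.norm_eq_abs] at hd1
    calc _ ≤ K * (|2| * ‖x‖ / ‖x‖ ^ 2 / ((n:ℝ) + 1)) := by gcongr
      _ = 2 * K / ((n:ℝ) + 1) / ‖x‖ := by
        rw [abs_of_pos (by norm_num : (0:ℝ) < 2)]; field_simp

/-- Divergence theorem in inequality form, on the punctured space. A nonnegative `H` dominated
by `Q + div P` off the origin, with `Q` and `|P| / |x|` integrable, has integral at most `∫ Q`:
the flux through small and large spheres disappears in the limit of logarithmic cutoffs. -/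
lemma lintegral_le_of_le_add_div {d : ℕ} (hd : 0 < d) {H Q : Ed d → ℝ} {P : Fin d → Ed d → ℝ}
    (hP : ∀ i, ContDiffOn ℝ 1 (P i) {0}ᶜ)
    (hPi : ∀ i, Integrable (fun x => P i x / ‖x‖))
    (hQ : Integrable Q) (hH : AEMeasurable H) (hH0 : ∀ x, 0 ≤ H x)
    (hle : ∀ x, x ≠ 0 → H x ≤ Q x + ∑ i, dd (P i) i x) :
    ∫⁻ x, ENNReal.ofReal (H x) ≤ ENNReal.ofReal (∫ x, Q x) := by
  obtain ⟨K, χ, hK, hχs, hχb, hχm, hχ0, hχi, hχ1, hχd⟩ := exists_cutoff d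
  have : Nonempty (Fin d) := ⟨⟨0, hd⟩⟩
  have hop : IsOpen ({0}ᶜ : Set (Ed d)) := isOpen_compl_singleton
  have hae : ∀ᵐ x : Ed d, x ≠ 0 := by
    have : Nontrivial (Ed d) := by
      apply Module.nontrivial_of_finrank_pos (R := ℝ); simpa using hd
    exact Measure.ae_ne volume 0
  let F : ℕ → Fin d → Ed d → ℝ := fun n i => indicator {0}ᶜ (fun x => χ n x * P i x)
  have hFne : ∀ n i x, x ≠ 0 → F n i =ᶠ[nhds x] fun x => χ n x * P i x := by
    intro n i x hx
    filter_upwards [hop.mem_nhds hx] with y hy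
    exact indicator_of_mem hy _
  have hFc : ∀ n i, ContDiff ℝ 1 (F n i) := by
    intro n i
    rw [contDiff_iff_contDiffAt]
    intro x
    by_cases hx : x = 0
    · subst hx
      obtain ⟨r, hr, hr'⟩ := hχ0 n
      have : F n i =ᶠ[nhds 0] fun _ => 0 := by
        filter_upwards [ball_mem_nhds (0 : Ed d) hr] with y hy
        by_cases hy0 : y = 0
        · simp [F, hy0]
        · simp [F, hr' y (by simpa using hy) hy0]
      exact contDiffAt_const.congr_of_eventuallyEq this
    · refine ContDiffAt.congr_of_eventuallyEq ?_ (hFne n i x hx)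
      exact ((hχs n).contDiffAt (hop.mem_nhds hx)).mul ((hP i).contDiffAt (hop.mem_nhds hx))
  have hFs : ∀ n i, HasCompactSupport (F n i) := by
    intro n i
    obtain ⟨r, hr, hr'⟩ := hχi n
    refine HasCompactSupport.intro (isCompact_closedBall (0 : Ed d) r) fun x hx => ?_
    have : r < ‖x‖ := by simpa using hx
    simp [F, hr' x this]
  have hFd : ∀ n i x, x ≠ 0 → dd (F n i) i x = χ n x * dd (P i) i x + dd (χ n) i x * P i x := by
    intro n i x hx
    have h1 : DifferentiableAt ℝ (χ n) x :=
      ((hχs n).contDiffAt (hop.mem_nhds hx)).differentiableAt (by norm_num)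
    have h2 : DifferentiableAt ℝ (P i) x :=
      ((hP i).contDiffAt (hop.mem_nhds hx)).differentiableAt (by norm_num)
    unfold dd
    rw [(hFne n i x hx).fderiv_eq, fderiv_fun_mul h1 h2]
    simp
    ring
  set W : Ed d → ℝ := fun x => ∑ i, |P i x / ‖x‖| with hW
  have hWi : Integrable W := integrable_finsetSum _ fun i _ => (hPi i).abs
  have hχQ : ∀ n, Integrable (fun x => χ n x * Q x) := fun n =>
    hQ.bdd_mul (c := 1) (hχm n).aestronglyMeasurable
      (.of_forall fun x => by rw [Real.norm_of_nonneg (hχb n x).1]; exact (hχb n x).2)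
  have hstep : ∀ n, ∫⁻ x, ENNReal.ofReal (χ n x * H x) ≤
      ENNReal.ofReal ((∫ x, χ n x * Q x) + K / ((n:ℝ) + 1) * ∫ x, W x) := by
    intro n
    have hsum : Integrable (fun x => ∑ i, dd (F n i) i x) :=
      integrable_finsetSum _ fun i _ => (integral_dd_eq_zero (hFc n i) (hFs n i) i).1
    have hs0 : ∫ x, ∑ i, dd (F n i) i x = 0 := by
      rw [integral_finsetSum _ fun i _ => (integral_dd_eq_zero (hFc n i) (hFs n i) i).1]
      exact Finset.sum_eq_zero fun i _ => (integral_dd_eq_zero (hFc n i) (hFs n i) i).2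
    have hpt : ∀ x, x ≠ 0 → χ n x * H x ≤
        χ n x * Q x + ∑ i, dd (F n i) i x + K / ((n:ℝ) + 1) * W x := by
      intro x hx
      have h1 : χ n x * H x ≤ χ n x * (Q x + ∑ i, dd (P i) i x) :=
        mul_le_mul_of_nonneg_left (hle x hx) (hχb n x).1
      have h2 : ∑ i, dd (F n i) i x = χ n x * ∑ i, dd (P i) i x + ∑ i, dd (χ n) i x * P i x := by
        rw [Finset.mul_sum, ← Finset.sum_add_distrib]
        exact Finset.sum_congr rfl fun i _ => hFd n i x hx
      have h3 : -∑ i, dd (χ n) i x * P i x ≤ K / ((n:ℝ) + 1) * W x := by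
        rw [hW, Finset.mul_sum, ← Finset.sum_neg_distrib]
        refine Finset.sum_le_sum fun i _ => ?_
        refine (neg_le_abs _).trans ?_
        rw [abs_mul, abs_div, abs_norm]
        calc _ ≤ K / ((n:ℝ) + 1) / ‖x‖ * |P i x| :=
              mul_le_mul_of_nonneg_right (hχd n x hx i) (abs_nonneg _)
          _ = _ := by ring
      linarith
    have hint : Integrable (fun x => χ n x * Q x + ∑ i, dd (F n i) i x + K / ((n:ℝ) + 1) * W x) :=
      ((hχQ n).add hsum).add (hWi.const_mul _)
    have hnn : 0 ≤ᵐ[volume] (fun x => χ n x * Q x + ∑ i, dd (F n i) i x + K / ((n:ℝ) + 1) * W x) := by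
      filter_upwards [hae] with x hx
      exact (mul_nonneg (hχb n x).1 (hH0 x)).trans (hpt x hx)
    calc ∫⁻ x, ENNReal.ofReal (χ n x * H x)
        ≤ ∫⁻ x, ENNReal.ofReal
          (χ n x * Q x + ∑ i, dd (F n i) i x + K / ((n:ℝ) + 1) * W x) := by
          refine lintegral_mono_ae ?_
          filter_upwards [hae] with x hx
          exact ENNReal.ofReal_le_ofReal (hpt x hx)
      _ = ENNReal.ofReal (∫ x,
          (χ n x * Q x + ∑ i, dd (F n i) i x + K / ((n:ℝ) + 1) * W x)) :=
          (ofReal_integral_eq_lintegral_ofReal hint hnn).symm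
      _ = _ := by
          have h1 := integral_add ((hχQ n).add hsum) (hWi.const_mul (K / ((n:ℝ) + 1)))
          have h2 := integral_add (hχQ n) hsum
          rw [hs0, add_zero] at h2
          rw [integral_const_mul] at h1
          simp only [Pi.add_apply] at h1
          rw [h1, h2]
  have hlim : Filter.Tendsto
      (fun n : ℕ => ENNReal.ofReal ((∫ x, χ n x * Q x) + K / ((n:ℝ) + 1) * ∫ x, W x))
      Filter.atTop (nhds (ENNReal.ofReal (∫ x, Q x))) := by
    refine ENNReal.tendsto_ofReal ?_
    have h1 : Filter.Tendsto (fun n : ℕ => ∫ x, χ n x * Q x) Filter.atTop (nhds (∫ x, Q x)) := by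
      refine tendsto_integral_of_dominated_convergence (fun x => |Q x|)
        (fun n => (hχQ n).aestronglyMeasurable) hQ.abs (fun n => .of_forall fun x => ?_)
        (.of_forall fun x => ?_)
      · rw [norm_mul, Real.norm_of_nonneg (hχb n x).1]
        exact mul_le_of_le_one_left (abs_nonneg _) (hχb n x).2
      · refine tendsto_const_nhds.congr' ?_
        filter_upwards [hχ1 x] with n hn
        rw [hn, one_mul]
    have h2 : Filter.Tendsto (fun n : ℕ => K / ((n:ℝ) + 1)) Filter.atTop (nhds 0) := by
      have := (tendsto_one_div_add_atTop_nhds_zero_nat (𝕜 := ℝ)).const_mul K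
      simpa [div_eq_mul_inv] using this
    simpa using h1.add (h2.mul_const (∫ x, W x))
  calc ∫⁻ x, ENNReal.ofReal (H x)
      = ∫⁻ x, Filter.liminf (fun n => ENNReal.ofReal (χ n x * H x)) Filter.atTop := by
        refine lintegral_congr fun x => ?_
        refine (Filter.Tendsto.liminf_eq ?_).symm
        refine tendsto_const_nhds.congr' ?_
        filter_upwards [hχ1 x] with n hn
        rw [hn, one_mul]
    _ ≤ Filter.liminf (fun n => ∫⁻ x, ENNReal.ofReal (χ n x * H x)) Filter.atTop :=
        lintegral_liminf_le' fun n => ((hχm n).aemeasurable.mul hH).ennreal_ofReal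
    _ ≤ Filter.liminf (fun n : ℕ => ENNReal.ofReal ((∫ x, χ n x * Q x)
          + K / ((n:ℝ) + 1) * ∫ x, W x)) Filter.atTop :=
        Filter.liminf_le_liminf (.of_forall hstep)
    _ = _ := hlim.liminf_eq

/-! ### The multiplier identities -/

/-- The Laplacian of a real valued function. -/
def rlap {d : ℕ} (v : Ed d → ℝ) (x : Ed d) : ℝ := ∑ i, dd (dd v i) i x

/-- The Euler derivative `x · ∇v`. -/
def euler {d : ℕ} (v : Ed d → ℝ) (x : Ed d) : ℝ := ∑ i, x i * dd v i x

/-- The regularised inverse distance `(δ² + |x|²)^(-1/2)`. -/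
def aw {d : ℕ} (δ : ℝ) (x : Ed d) : ℝ := (√(δ ^ 2 + ‖x‖ ^ 2))⁻¹

lemma aw_sq {d : ℕ} {δ : ℝ} (hδ : 0 < δ) (x : Ed d) :
    aw δ x ^ 2 * (δ ^ 2 + ‖x‖ ^ 2) = 1 := by
  have h : 0 < δ ^ 2 + ‖x‖ ^ 2 := by positivity
  rw [aw, inv_pow, Real.sq_sqrt h.le, inv_mul_cancel₀ h.ne']

lemma aw_pos {d : ℕ} {δ : ℝ} (hδ : 0 < δ) (x : Ed d) : 0 < aw δ x := by
  have h : 0 < δ ^ 2 + ‖x‖ ^ 2 := by positivity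
  exact inv_pos.2 (Real.sqrt_pos.2 h)

lemma aw_mul_norm_le {d : ℕ} {δ : ℝ} (hδ : 0 < δ) (x : Ed d) : aw δ x * ‖x‖ ≤ 1 := by
  have h := aw_sq hδ x
  have h1 := aw_pos hδ x
  have h2 : (aw δ x * ‖x‖) ^ 2 ≤ 1 := by nlinarith [mul_nonneg (sq_nonneg (aw δ x)) (sq_nonneg δ)]
  exact (sq_le_one_iff₀ (by positivity)).1 h2

lemma aw_mul_le {d : ℕ} {δ : ℝ} (hδ : 0 < δ) (x : Ed d) : aw δ x * δ ≤ 1 := by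
  have h := aw_sq hδ x
  have h1 := aw_pos hδ x
  have h2 : (aw δ x * δ) ^ 2 ≤ 1 := by nlinarith [mul_nonneg (sq_nonneg (aw δ x)) (sq_nonneg ‖x‖)]
  exact (sq_le_one_iff₀ (by positivity)).1 h2

lemma contDiff_aw {d : ℕ} {δ : ℝ} (hδ : 0 < δ) {n : WithTop ℕ∞} :
    ContDiff ℝ n (aw δ : Ed d → ℝ) := by
  have h : ∀ x : Ed d, 0 < δ ^ 2 + ‖x‖ ^ 2 := fun x => by positivity
  refine ContDiff.inv (ContDiff.sqrt (contDiff_const.add (contDiff_norm_sq ℝ)) fun x => (h x).ne')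
    fun x => (Real.sqrt_pos.2 (h x)).ne'

lemma hasDerivAt_line_aw {d : ℕ} {δ : ℝ} (hδ : 0 < δ) (x : Ed d) (i : Fin d) :
    HasDerivAt (fun t : ℝ => aw δ (x + t • EuclideanSpace.single i 1)) (-(aw δ x ^ 3 * x i)) 0 := by
  have h : 0 < δ ^ 2 + ‖x‖ ^ 2 := by positivity
  have h0 : 0 < √(δ ^ 2 + ‖x‖ ^ 2) := Real.sqrt_pos.2 h
  have h1 := ((hasDerivAt_line_norm_sq x i).const_add (δ ^ 2)).sqrt (by simpa using h.ne')
  have h2 := h1.inv (by simpa using h0.ne')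
  refine hasDerivAt_congr h2 (fun s => rfl) ?_
  simp only [aw, zero_smul, add_zero]
  rw [inv_pow]
  field_simp

lemma dd_aw {d : ℕ} {δ : ℝ} (hδ : 0 < δ) (x : Ed d) (i : Fin d) :
    dd (aw δ) i x = -(aw δ x ^ 3 * x i) :=
  dd_eq_of_hasDerivAt (((contDiff_aw hδ (n := 1)).differentiable (by norm_num)).differentiableAt)
    (hasDerivAt_line_aw hδ x i)

lemma contDiff_dd {d : ℕ} {v : Ed d → ℝ} (hv : ContDiff ℝ 2 v) (i : Fin d) :
    ContDiff ℝ 1 (dd v i) :=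
  (hv.fderiv_right (m := 1) (by norm_num)).clm_apply contDiff_const

lemma dd_comm {d : ℕ} {v : Ed d → ℝ} (hv : ContDiff ℝ 2 v) (i j : Fin d) (x : Ed d) :
    dd (dd v i) j x = dd (dd v j) i x := by
  have hs := (hv.contDiffAt (x := x)).isSymmSndFDerivAt (by simp)
  have h : ∀ i j : Fin d, dd (dd v i) j x =
      fderiv ℝ (fderiv ℝ v) x (EuclideanSpace.single j 1) (EuclideanSpace.single i 1) := by
    intro i j
    have h1 : DifferentiableAt ℝ (fderiv ℝ v) x :=
      ((hv.fderiv_right (m := 1) (by norm_num)).differentiable (by norm_num)).differentiableAt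
    change fderiv ℝ (fun y => fderiv ℝ v y (EuclideanSpace.single i 1)) x _ = _
    rw [fderiv_clm_apply h1 (differentiableAt_const _)]
    simp
  rw [h, h, hs.eq]

lemma fderiv_self_eq_euler {d : ℕ} (v : Ed d → ℝ) (x : Ed d) : fderiv ℝ v x x = euler v x := by
  have hx : x = ∑ i, x i • (EuclideanSpace.single i (1:ℝ) : Ed d) := by
    ext j; simp [Finset.sum_apply, Pi.single_apply]
  conv_lhs => rw [show fderiv ℝ v x x = fderiv ℝ v x (∑ i, x i • EuclideanSpace.single i (1:ℝ)) from
    congrArg (fderiv ℝ v x) hx]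
  simp [euler, dd]

/-- Divergence of `b v ∇z` for a radial weight with `∇b = -c x`. -/
lemma div_energy {d : ℕ} {b c v z : Ed d → ℝ} (hb : ContDiff ℝ 1 b)
    (hbd : ∀ i x, dd b i x = -(c x * x i)) (hv : ContDiff ℝ 2 v) (hz : ContDiff ℝ 2 z)
    (x : Ed d) :
    ∑ i, dd (fun y => b y * (v y * dd z i y)) i x =
      -(c x * v x * euler z x) + b x * ∑ i, dd v i x * dd z i x + b x * (v x * rlap z x) := by
  have hb' := (hb.differentiable (by norm_num)) x
  have hv' := (hv.differentiable (by norm_num)) x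
  have h : ∀ i, dd (fun y => b y * (v y * dd z i y)) i x =
      -(c x * v x * (x i * dd z i x)) + b x * (dd v i x * dd z i x)
        + b x * (v x * dd (dd z i) i x) := by
    intro i
    have hz' := ((contDiff_dd hz i).differentiable (by norm_num)) x
    have h1 := (hasDerivAt_line hb' i).mul ((hasDerivAt_line hv' i).mul (hasDerivAt_line hz' i))
    refine dd_eq_of_hasDerivAt (hb'.mul (hv'.mul hz')) (hasDerivAt_congr h1 (fun s => rfl) ?_)
    simp only [zero_smul, add_zero, hbd, Pi.mul_apply]
    ring
  rw [Finset.sum_congr rfl fun i _ => h i]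
  simp only [Finset.sum_add_distrib, Finset.sum_neg_distrib, ← Finset.mul_sum, euler, rlap]

/-- The zeroth order coefficient `½ Δ √(δ² + |x|²)` of the Morawetz multiplier. -/
def bw {d : ℕ} (δ : ℝ) (x : Ed d) : ℝ := (((d:ℝ) - 1) * aw δ x + δ ^ 2 * aw δ x ^ 3) / 2

/-- The coefficient in `∇(bw δ) = -(cw δ) x`. -/
def cw {d : ℕ} (δ : ℝ) (x : Ed d) : ℝ :=
  (((d:ℝ) - 1) * aw δ x ^ 3 + 3 * δ ^ 2 * aw δ x ^ 5) / 2

/-- The Morawetz flux of a real valued function `v`, for the potential `Z` and the multiplier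
`∇ψ · ∇v + ½ Δψ v` with `ψ = √(δ² + |x|²)`. -/
def flux {d : ℕ} (δ : ℝ) (Z v : Ed d → ℝ) (i : Fin d) (x : Ed d) : ℝ :=
  bw δ x * (v x * dd v i x) + cw δ x * x i * v x ^ 2 / 2
    + aw δ x * (dd v i x * euler v x) - aw δ x * x i * (∑ j, dd v j x ^ 2) / 2
    - Z x * (aw δ x * (x i * v x ^ 2)) / 2

/-- The Morawetz identity for a real valued function. -/
lemma div_flux {d : ℕ} {δ : ℝ} (hδ : 0 < δ) {Z v : Ed d → ℝ} (hv : ContDiff ℝ 2 v) {x : Ed d}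
    (hZ : DifferentiableAt ℝ Z x) :
    ∑ i, dd (flux δ Z v i) i x =
      -((-rlap v x + Z x * v x) * (aw δ x * euler v x + bw δ x * v x))
      + (aw δ x * ∑ j, dd v j x ^ 2) - aw δ x ^ 3 * euler v x ^ 2
      + (((d:ℝ) - 1) * ((d:ℝ) - 3) * aw δ x ^ 3 + 6 * ((d:ℝ) - 3) * δ ^ 2 * aw δ x ^ 5
          + 15 * δ ^ 4 * aw δ x ^ 7) / 4 * v x ^ 2
      - aw δ x * euler Z x * v x ^ 2 / 2 := by
  have hv' := (hv.differentiable (by norm_num)) x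
  have hdv := fun i => ((contDiff_dd hv i).differentiable (by norm_num)) x
  have hco : ∀ j : Fin d, DifferentiableAt ℝ (fun y : Ed d => y j) x := fun j => by fun_prop
  have ha' : DifferentiableAt ℝ (aw δ : Ed d → ℝ) x :=
    ((contDiff_aw hδ (n := 1)).differentiable (by norm_num)) x
  have hb' : DifferentiableAt ℝ (bw δ : Ed d → ℝ) x := by
    change DifferentiableAt ℝ (fun y => bw δ y) x
    unfold bw; fun_prop
  have hc' : DifferentiableAt ℝ (cw δ : Ed d → ℝ) x := by
    change DifferentiableAt ℝ (fun y => cw δ y) x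
    unfold cw; fun_prop
  have he' : DifferentiableAt ℝ (euler v) x := by
    have : euler v = fun y => ∑ i, y i * dd v i y := rfl
    rw [this]
    exact DifferentiableAt.fun_sum fun i _ => (hco i).mul (hdv i)
  have hg' : DifferentiableAt ℝ (fun y => ∑ j, dd v j y ^ 2) x :=
    DifferentiableAt.fun_sum fun i _ => (hdv i).pow 2
  have hal := hasDerivAt_line_aw hδ x
  have h : ∀ i, dd (flux δ Z v i) i x =
      bw δ x * dd v i x ^ 2 + bw δ x * v x * dd (dd v i) i x
      + cw δ x * v x ^ 2 / 2
      - (3 * ((d:ℝ) - 1) * aw δ x ^ 5 + 15 * δ ^ 2 * aw δ x ^ 7) / 4 * v x ^ 2 * x i ^ 2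
      + aw δ x * euler v x * dd (dd v i) i x - aw δ x ^ 3 * euler v x * (x i * dd v i x)
      + aw δ x * dd v i x ^ 2 + aw δ x * ∑ j, x j * dd v i x * dd (dd v j) i x
      - aw δ x * (∑ j, dd v j x ^ 2) / 2 + aw δ x ^ 3 * (∑ j, dd v j x ^ 2) / 2 * x i ^ 2
      - aw δ x * ∑ j, x i * dd v j x * dd (dd v j) i x
      - aw δ x * v x ^ 2 / 2 * (x i * dd Z i x) - Z x * aw δ x * v x ^ 2 / 2
      + Z x * aw δ x ^ 3 * v x ^ 2 / 2 * x i ^ 2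
      - Z x * aw δ x * v x * (x i * dd v i x) := by
    intro i
    have hb1 : HasDerivAt (fun t : ℝ => bw δ (x + t • EuclideanSpace.single i 1))
        (-(cw δ x * x i)) 0 := by
      refine hasDerivAt_congr ((((hal i).const_mul ((d:ℝ) - 1)).add
        (((hal i).pow 3).const_mul (δ ^ 2))).div_const (2:ℝ)) (fun s => rfl) ?_
      simp only [zero_smul, add_zero, cw]
      push_cast; ring
    have hc1 : HasDerivAt (fun t : ℝ => cw δ (x + t • EuclideanSpace.single i 1))
        (-((3 * ((d:ℝ) - 1) * aw δ x ^ 5 + 15 * δ ^ 2 * aw δ x ^ 7) / 2 * x i)) 0 := by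
      refine hasDerivAt_congr (((((hal i).pow 3).const_mul ((d:ℝ) - 1)).add
        (((hal i).pow 5).const_mul (3 * δ ^ 2))).div_const (2:ℝ)) (fun s => rfl) ?_
      simp only [zero_smul, add_zero]
      push_cast; ring
    have hx1 : HasDerivAt (fun t : ℝ => (x + t • EuclideanSpace.single i (1:ℝ)) i) 1 0 := by
      simpa using hasDerivAt_line_coord x i i
    have he1 : HasDerivAt (fun t : ℝ => euler v (x + t • EuclideanSpace.single i 1))
        (dd v i x + ∑ j, x j * dd (dd v j) i x) 0 := by
      refine hasDerivAt_congr (HasDerivAt.fun_sum fun j (_ : j ∈ Finset.univ) =>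
        (hasDerivAt_line_coord x i j).mul (hasDerivAt_line (hdv j) i)) (fun s => rfl) ?_
      simp [Finset.sum_add_distrib]
    have hg1 : HasDerivAt (fun t : ℝ => ∑ j, dd v j (x + t • EuclideanSpace.single i 1) ^ 2)
        (∑ j, 2 * (dd v j x * dd (dd v j) i x)) 0 := by
      refine hasDerivAt_congr (HasDerivAt.fun_sum fun j (_ : j ∈ Finset.univ) =>
        ((hasDerivAt_line (hdv j) i).pow 2)) (fun s => rfl) ?_
      refine Finset.sum_congr rfl fun j _ => ?_
      simp only [zero_smul, add_zero]
      push_cast; ring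
    have hv1 := hasDerivAt_line hv' i
    have hdv1 := hasDerivAt_line (hdv i) i
    have hZ1 := hasDerivAt_line hZ i
    have hfl := ((((hb1.mul (hv1.mul hdv1)).add (((hc1.mul hx1).mul (hv1.pow 2)).div_const (2:ℝ))).add
      ((hal i).mul (hdv1.mul he1))).sub ((((hal i).mul hx1).mul hg1).div_const (2:ℝ))).sub
      ((hZ1.mul ((hal i).mul (hx1.mul (hv1.pow 2)))).div_const (2:ℝ))
    have hdvi := hdv i
    have hdiff : DifferentiableAt ℝ (flux δ Z v i) x := by
      change DifferentiableAt ℝ (fun y => flux δ Z v i y) x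
      unfold flux; fun_prop
    refine dd_eq_of_hasDerivAt hdiff (hasDerivAt_congr hfl (fun s => rfl) ?_)
    have e1 : ∑ j, x j * dd v i x * dd (dd v j) i x = dd v i x * ∑ j, x j * dd (dd v j) i x := by
      rw [Finset.mul_sum]; exact Finset.sum_congr rfl fun j _ => by ring
    have e2 : ∑ j, x i * dd v j x * dd (dd v j) i x = x i * ∑ j, dd v j x * dd (dd v j) i x := by
      rw [Finset.mul_sum]; exact Finset.sum_congr rfl fun j _ => by ring
    rw [e1, e2, ← Finset.mul_sum]
    simp only [zero_smul, add_zero, Pi.pow_apply, Pi.mul_apply]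
    push_cast
    ring
  have hsw : ∑ i, ∑ j, x j * dd v i x * dd (dd v j) i x
      = ∑ i, ∑ j, x i * dd v j x * dd (dd v j) i x := by
    rw [Finset.sum_comm]
    refine Finset.sum_congr rfl fun i _ => Finset.sum_congr rfl fun j _ => ?_
    rw [dd_comm hv i j]
  have hr : ∑ i, x i ^ 2 = ‖x‖ ^ 2 := (EuclideanSpace.real_norm_sq_eq x).symm
  rw [Finset.sum_congr rfl fun i _ => h i]
  simp only [Finset.sum_add_distrib, Finset.sum_sub_distrib, ← Finset.mul_sum, hsw, hr,
    Finset.sum_const, Finset.card_univ, Fintype.card_fin, nsmul_eq_mul]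
  have E1 : ∑ i, x i * dd v i x = euler v x := rfl
  have E2 : ∑ i, x i * dd Z i x = euler Z x := rfl
  have E3 : ∑ i, dd (dd v i) i x = rlap v x := rfl
  rw [E1, E2, E3]
  have haw := aw_sq hδ x
  have hr2 : aw δ x ^ 2 * ‖x‖ ^ 2 = 1 - δ ^ 2 * aw δ x ^ 2 := by linarith
  simp only [bw, cw]
  generalize (∑ j, dd v j x ^ 2) = S
  generalize euler v x = X at *
  generalize euler Z x = Y at *
  generalize rlap v x = Lv at *
  generalize aw δ x = a at *
  generalize ‖x‖ = r at *
  generalize v x = w at *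
  generalize Z x = z at *
  linear_combination (a * S / 2 + z * a * w ^ 2 / 2
    - (3 * ((d:ℝ) - 1) * a ^ 3 + 15 * δ ^ 2 * a ^ 5) / 4 * w ^ 2) * hr2

/-! ### Solutions and integrability -/

/-- The length of the vector `(v x, z x)`; the modulus of `v + i z`. -/
def nu {d : ℕ} (v z : Ed d → ℝ) (x : Ed d) : ℝ := √(v x ^ 2 + z x ^ 2)

/-- The squared length of the gradient of `v + i z`. -/
def gs {d : ℕ} (v z : Ed d → ℝ) (x : Ed d) : ℝ := ∑ i, (dd v i x ^ 2 + dd z i x ^ 2)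

/-- The length of the gradient of `v + i z`. -/
def gn {d : ℕ} (v z : Ed d → ℝ) (x : Ed d) : ℝ := √(gs v z x)

/-- The hypotheses of the theorem in real form: `u = v + i z`, `f = p + i q`, and the sign in front
of `ε` is absorbed into `ε`. -/
structure Sol {d : ℕ} (γ η ε τ : ℝ) (V v z p q : Ed d → ℝ) : Prop where
  hd : 3 < d
  hγ : 0 < γ
  hη : 0 < η
  hε : ε ≠ 0
  V0 : ∀ x, 0 ≤ V x
  VC : ContDiffOn ℝ 1 V {0}ᶜ
  rep : ∀ x, x ≠ 0 →
    γ * V x + euler V x ≤ (1 - η) * ((d:ℝ) - 1) * ((d:ℝ) - 3) / (2 * ‖x‖ ^ 2)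
  hv : ContDiff ℝ 2 v
  hz : ContDiff ℝ 2 z
  eqp : ∀ x, -rlap v x + (V x - τ) * v x - ε * z x = p x
  eqq : ∀ x, -rlap z x + (V x - τ) * z x + ε * v x = q x
  iu : Integrable (fun x => nu v z x ^ 2)
  ig : Integrable (fun x => gn v z x ^ 2)
  ife : Integrable (fun x => nu p q x ^ 2)

lemma nu_nonneg {d : ℕ} (v z : Ed d → ℝ) (x : Ed d) : 0 ≤ nu v z x := Real.sqrt_nonneg _
lemma gn_nonneg {d : ℕ} (v z : Ed d → ℝ) (x : Ed d) : 0 ≤ gn v z x := Real.sqrt_nonneg _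
lemma nu_sq {d : ℕ} (v z : Ed d → ℝ) (x : Ed d) : nu v z x ^ 2 = v x ^ 2 + z x ^ 2 :=
  Real.sq_sqrt (by positivity)
lemma gs_nonneg {d : ℕ} (v z : Ed d → ℝ) (x : Ed d) : 0 ≤ gs v z x :=
  Finset.sum_nonneg fun i _ => by positivity
lemma gn_sq {d : ℕ} (v z : Ed d → ℝ) (x : Ed d) : gn v z x ^ 2 = gs v z x :=
  Real.sq_sqrt (gs_nonneg v z x)

lemma abs_le_nu_left {d : ℕ} (v z : Ed d → ℝ) (x : Ed d) : |v x| ≤ nu v z x :=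
  Real.abs_le_sqrt (by nlinarith [sq_nonneg (z x)])
lemma abs_le_nu_right {d : ℕ} (v z : Ed d → ℝ) (x : Ed d) : |z x| ≤ nu v z x :=
  Real.abs_le_sqrt (by nlinarith [sq_nonneg (v x)])

lemma abs_dd_le_gn_left {d : ℕ} (v z : Ed d → ℝ) (i : Fin d) (x : Ed d) :
    |dd v i x| ≤ gn v z x := by
  refine Real.abs_le_sqrt ?_
  have := Finset.single_le_sum (f := fun i => dd v i x ^ 2 + dd z i x ^ 2)
    (fun i _ => by positivity) (Finset.mem_univ i)
  exact le_trans (by nlinarith [sq_nonneg (dd z i x)]) this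

lemma nu_swap {d : ℕ} (v z : Ed d → ℝ) : nu v z = nu z v := by
  ext x; simp [nu, add_comm]
lemma gn_swap {d : ℕ} (v z : Ed d → ℝ) : gn v z = gn z v := by
  ext x; simp [gn, gs, add_comm]

lemma abs_dd_le_gn_right {d : ℕ} (v z : Ed d → ℝ) (i : Fin d) (x : Ed d) :
    |dd z i x| ≤ gn v z x := by rw [gn_swap]; exact abs_dd_le_gn_left z v i x

/-- Cauchy–Schwarz in the plane. -/
lemma plane_cs (a b c e : ℝ) : a * c + b * e ≤ √(a ^ 2 + b ^ 2) * √(c ^ 2 + e ^ 2) := by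
  rw [← Real.sqrt_mul (by positivity)]
  refine (le_abs_self _).trans (Real.abs_le_sqrt ?_)
  nlinarith [sq_nonneg (a * e - b * c)]

lemma euler_sq_le {d : ℕ} (v : Ed d → ℝ) (x : Ed d) :
    euler v x ^ 2 ≤ ‖x‖ ^ 2 * ∑ j, dd v j x ^ 2 := by
  rw [EuclideanSpace.real_norm_sq_eq]
  exact Finset.sum_mul_sq_le_sq_mul_sq _ _ _

lemma gs_eq {d : ℕ} (v z : Ed d → ℝ) (x : Ed d) :
    gs v z x = ∑ j, dd v j x ^ 2 + ∑ j, dd z j x ^ 2 := Finset.sum_add_distrib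

lemma euler_pair_le {d : ℕ} (v z : Ed d → ℝ) (x : Ed d) :
    euler v x ^ 2 + euler z x ^ 2 ≤ ‖x‖ ^ 2 * gs v z x := by
  rw [gs_eq, mul_add]
  exact add_le_add (euler_sq_le v x) (euler_sq_le z x)

lemma sqrt_euler_le {d : ℕ} (v z : Ed d → ℝ) (x : Ed d) :
    √(euler v x ^ 2 + euler z x ^ 2) ≤ ‖x‖ * gn v z x := by
  refine Real.sqrt_le_iff.2 ⟨mul_nonneg (norm_nonneg _) (gn_nonneg _ _ _), ?_⟩
  rw [mul_pow, gn_sq]; exact euler_pair_le v z x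

lemma abs_euler_le {d : ℕ} (v z : Ed d → ℝ) (x : Ed d) : |euler v x| ≤ ‖x‖ * gn v z x :=
  (Real.abs_le_sqrt (by nlinarith [sq_nonneg (euler z x)])).trans (sqrt_euler_le v z x)

/-- `Re (ū x·∇u)` against `|u| |x| |∇u|`. -/
lemma re_euler_le {d : ℕ} (v z : Ed d → ℝ) (x : Ed d) :
    |v x * euler v x + z x * euler z x| ≤ nu v z x * (‖x‖ * gn v z x) := by
  have h := sqrt_euler_le v z x
  have h0 := nu_nonneg v z x
  refine abs_le'.2 ⟨(plane_cs _ _ _ _).trans (mul_le_mul_of_nonneg_left h h0), ?_⟩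
  have := plane_cs (-v x) (-z x) (euler v x) (euler z x)
  rw [neg_sq, neg_sq] at this
  exact (by linarith : _ ≤ _).trans (this.trans (mul_le_mul_of_nonneg_left h h0))

/-- `Im (ū x·∇u)` against `|u| |x| |∇u|`. -/
lemma im_euler_le {d : ℕ} (v z : Ed d → ℝ) (x : Ed d) :
    |v x * euler z x - z x * euler v x| ≤ nu v z x * (‖x‖ * gn v z x) := by
  have h := sqrt_euler_le v z x
  have h0 := nu_nonneg v z x
  refine abs_le'.2 ⟨?_, ?_⟩
  · have := plane_cs (-z x) (v x) (euler v x) (euler z x)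
    rw [neg_sq, add_comm (z x ^ 2)] at this
    exact (by linarith : _ ≤ _).trans (this.trans (mul_le_mul_of_nonneg_left h h0))
  · have := plane_cs (z x) (-v x) (euler v x) (euler z x)
    rw [neg_sq, add_comm (z x ^ 2)] at this
    exact (by linarith : _ ≤ _).trans (this.trans (mul_le_mul_of_nonneg_left h h0))

lemma re_pair_le {d : ℕ} (p q v z : Ed d → ℝ) (x : Ed d) :
    |p x * v x + q x * z x| ≤ nu p q x * nu v z x := by
  refine abs_le'.2 ⟨plane_cs _ _ _ _, ?_⟩
  have := plane_cs (-p x) (-q x) (v x) (z x)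
  rw [neg_sq, neg_sq] at this
  exact (by linarith : _ ≤ _).trans this

lemma im_pair_le {d : ℕ} (p q v z : Ed d → ℝ) (x : Ed d) :
    |q x * v x - p x * z x| ≤ nu p q x * nu v z x := by
  refine abs_le'.2 ⟨?_, ?_⟩
  · have := plane_cs (q x) (-p x) (v x) (z x)
    rw [neg_sq, add_comm (q x ^ 2)] at this
    exact (by linarith : _ ≤ _).trans this
  · have := plane_cs (-q x) (p x) (v x) (z x)
    rw [neg_sq, add_comm (q x ^ 2)] at this
    exact (by linarith : _ ≤ _).trans this

lemma continuous_rlap {d : ℕ} {v : Ed d → ℝ} (hv : ContDiff ℝ 2 v) : Continuous (rlap v) := by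
  unfold rlap
  refine continuous_finsetSum _ fun i _ => ?_
  exact ((contDiff_dd hv i).continuous_fderiv (by norm_num)).clm_apply continuous_const

lemma continuous_nu {d : ℕ} {v z : Ed d → ℝ} (hv : Continuous v) (hz : Continuous z) :
    Continuous (nu v z) := by
  unfold nu; fun_prop

lemma continuous_gn {d : ℕ} {v z : Ed d → ℝ} (hv : ContDiff ℝ 2 v) (hz : ContDiff ℝ 2 z) :
    Continuous (gn v z) := by
  have h1 := fun i => (contDiff_dd hv i).continuous
  have h2 := fun i => (contDiff_dd hz i).continuous
  unfold gn gs; fun_prop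

lemma ae_ne_zero {d : ℕ} (hd : 0 < d) : ∀ᵐ x : Ed d, x ≠ 0 := by
  have : Nontrivial (Ed d) := by
    apply Module.nontrivial_of_finrank_pos (R := ℝ); simpa using hd
  exact Measure.ae_ne volume 0

/-- A function controlling all integrands that do not contain the potential. -/
def dom {d : ℕ} (v z p q : Ed d → ℝ) (x : Ed d) : ℝ :=
  nu p q x ^ 2 + (nu v z x ^ 2 + gn v z x ^ 2) * (1 + 1 / ‖x‖ ^ 3)

lemma dom_nonneg {d : ℕ} (v z p q : Ed d → ℝ) (x : Ed d) : 0 ≤ dom v z p q x := by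
  unfold dom; positivity

namespace Sol

variable {d : ℕ} {γ η ε τ : ℝ} {V v z p q : Ed d → ℝ}

lemma mV (h : Sol γ η ε τ V v z p q) : Measurable V :=
  measurable_of_continuousOn_compl_singleton 0 h.VC.continuousOn

lemma mp (h : Sol γ η ε τ V v z p q) : Measurable (nu p q) := by
  have h1 : p = fun x => -rlap v x + (V x - τ) * v x - ε * z x := funext fun x => (h.eqp x).symm
  have h2 : q = fun x => -rlap z x + (V x - τ) * z x + ε * v x := funext fun x => (h.eqq x).symm
  have hV := h.mV
  have a1 := (continuous_rlap h.hv).measurable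
  have a2 := (continuous_rlap h.hz).measurable
  have a3 := h.hv.continuous.measurable
  have a4 := h.hz.continuous.measurable
  have hp : Measurable p := by rw [h1]; fun_prop
  have hq : Measurable q := by rw [h2]; fun_prop
  unfold nu; fun_prop

lemma mu (h : Sol γ η ε τ V v z p q) : Measurable (nu v z) :=
  (continuous_nu h.hv.continuous h.hz.continuous).measurable

lemma mg (h : Sol γ η ε τ V v z p q) : Measurable (gn v z) :=
  (continuous_gn h.hv h.hz).measurable

lemma dpos (h : Sol γ η ε τ V v z p q) : 0 < d := by have := h.hd; omega

lemma d4 (h : Sol γ η ε τ V v z p q) : (4:ℝ) ≤ d := by have := h.hd; exact_mod_cast this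

lemma integrable_dom (h : Sol γ η ε τ V v z p q) : Integrable (dom v z p q) := by
  have h1 := integrable_div_norm_cube h.hd
    ((continuous_nu h.hv.continuous h.hz.continuous).pow 2) h.iu
  have h2 := integrable_div_norm_cube h.hd ((continuous_gn h.hv h.hz).pow 2) h.ig
  refine (h.ife.add ((h.iu.add h.ig).add (h1.add h2))).congr (.of_forall fun x => ?_)
  simp only [dom, Pi.add_apply, Pi.pow_apply]
  ring

lemma integ (h : Sol γ η ε τ V v z p q) {F : Ed d → ℝ} (hF : Measurable F) (K : ℝ)
    (hb : ∀ x, x ≠ 0 → |F x| ≤ K * dom v z p q x) : Integrable F := by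
  refine (h.integrable_dom.const_mul K).mono' hF.aestronglyMeasurable ?_
  filter_upwards [ae_ne_zero h.dpos] with x hx
  exact hb x hx

end Sol

lemma le_one_add_inv_cube {r : ℝ} (hr : 0 < r) : 1 / r ≤ 1 + 1 / r ^ 3 ∧ 1 / r ^ 2 ≤ 1 + 1 / r ^ 3 := by
  have ht : 0 < 1 / r := by positivity
  have h2 : 1 / r ^ 2 = (1 / r) ^ 2 := by rw [div_pow, one_pow]
  have h3 : 1 / r ^ 3 = (1 / r) ^ 3 := by rw [div_pow, one_pow]
  rw [h2, h3]
  generalize 1 / r = t at *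
  constructor
  · nlinarith [sq_nonneg (t - 1), mul_pos ht ht, mul_nonneg ht.le (sq_nonneg (t - 1))]
  · nlinarith [sq_nonneg (t - 1), mul_pos ht ht, mul_nonneg ht.le (sq_nonneg (t - 1))]

/-- `dom` controls `(|u|² + |∇u|²)(1 + |x|⁻¹ + |x|⁻² + |x|⁻³)` up to a constant. -/
lemma dom_facts {d : ℕ} (v z p q : Ed d → ℝ) {x : Ed d} (hx : x ≠ 0) :
    nu p q x ^ 2 ≤ dom v z p q x ∧ nu v z x ^ 2 + gn v z x ^ 2 ≤ dom v z p q x ∧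
    (nu v z x ^ 2 + gn v z x ^ 2) / ‖x‖ ≤ dom v z p q x ∧
    (nu v z x ^ 2 + gn v z x ^ 2) / ‖x‖ ^ 2 ≤ dom v z p q x ∧
    (nu v z x ^ 2 + gn v z x ^ 2) / ‖x‖ ^ 3 ≤ dom v z p q x := by
  have hr : 0 < ‖x‖ := norm_pos_iff.2 hx
  obtain ⟨h1, h2⟩ := le_one_add_inv_cube hr
  have h3 : 0 < 1 / ‖x‖ ^ 3 := by positivity
  have hS : 0 ≤ nu v z x ^ 2 + gn v z x ^ 2 := by positivity
  have hP : 0 ≤ nu p q x ^ 2 := by positivity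
  unfold dom
  simp only [div_eq_mul_one_div (nu v z x ^ 2 + gn v z x ^ 2)]
  generalize nu v z x ^ 2 + gn v z x ^ 2 = S at *
  refine ⟨?_, ?_, ?_, ?_, ?_⟩
  · nlinarith
  · nlinarith
  · nlinarith [mul_le_mul_of_nonneg_left h1 hS]
  · nlinarith [mul_le_mul_of_nonneg_left h2 hS]
  · nlinarith

namespace Sol

variable {d : ℕ} {γ η ε τ : ℝ} {V v z p q : Ed d → ℝ}

lemma i_fg (h : Sol γ η ε τ V v z p q) : Integrable (fun x => nu p q x * gn v z x) := by
  refine h.integ (h.mp.mul h.mg) 2 fun x hx => ?_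
  obtain ⟨h1, h2, -⟩ := dom_facts v z p q hx
  rw [abs_of_nonneg (mul_nonneg (nu_nonneg _ _ _) (gn_nonneg _ _ _))]
  nlinarith [sq_nonneg (nu p q x - gn v z x), sq_nonneg (nu v z x)]

lemma i_fu (h : Sol γ η ε τ V v z p q) : Integrable (fun x => nu p q x * nu v z x) := by
  refine h.integ (h.mp.mul h.mu) 2 fun x hx => ?_
  obtain ⟨h1, h2, -⟩ := dom_facts v z p q hx
  rw [abs_of_nonneg (mul_nonneg (nu_nonneg _ _ _) (nu_nonneg _ _ _))]
  nlinarith [sq_nonneg (nu p q x - nu v z x), sq_nonneg (gn v z x)]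

lemma i_fur (h : Sol γ η ε τ V v z p q) : Integrable (fun x => nu p q x * nu v z x / ‖x‖) := by
  refine h.integ ((h.mp.mul h.mu).div (by fun_prop)) 2 fun x hx => ?_
  obtain ⟨h1, -, -, h2, -⟩ := dom_facts v z p q hx
  have hr : 0 < ‖x‖ := norm_pos_iff.2 hx
  rw [abs_of_nonneg (div_nonneg (mul_nonneg (nu_nonneg _ _ _) (nu_nonneg _ _ _)) hr.le)]
  rw [add_div] at h2
  have h3 : 0 ≤ gn v z x ^ 2 / ‖x‖ ^ 2 := by positivity
  rw [← div_pow] at h2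
  rw [mul_div_assoc]
  nlinarith [sq_nonneg (nu p q x - nu v z x / ‖x‖)]

lemma i_ug (h : Sol γ η ε τ V v z p q) : Integrable (fun x => nu v z x * gn v z x) := by
  refine h.integ (h.mu.mul h.mg) 1 fun x hx => ?_
  obtain ⟨-, h2, -⟩ := dom_facts v z p q hx
  rw [abs_of_nonneg (mul_nonneg (nu_nonneg _ _ _) (gn_nonneg _ _ _))]
  nlinarith [sq_nonneg (nu v z x - gn v z x), mul_nonneg (nu_nonneg v z x) (gn_nonneg v z x)]

lemma i_u3 (h : Sol γ η ε τ V v z p q) : Integrable (fun x => nu v z x ^ 2 / ‖x‖ ^ 3) :=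
  integrable_div_norm_cube h.hd ((continuous_nu h.hv.continuous h.hz.continuous).pow 2) h.iu

lemma i_re (h : Sol γ η ε τ V v z p q) (i : Fin d) {b w y : Ed d → ℝ} {B : ℝ}
    (hb : Continuous b) (hB : ∀ x, |b x| ≤ B) (hw : ContDiff ℝ 2 w) (hy : ContDiff ℝ 2 y)
    (hwb : ∀ x, |w x| ≤ nu v z x) (hyb : ∀ x, |dd y i x| ≤ gn v z x) :
    Integrable (fun x => b x * (w x * dd y i x) / ‖x‖) := by
  have hy' := (contDiff_dd hy i).continuous
  have hw' := hw.continuous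
  refine h.integ ((by fun_prop : Continuous fun x => b x * (w x * dd y i x)).measurable.div
    (by fun_prop)) B fun x hx => ?_
  obtain ⟨-, -, h2, -⟩ := dom_facts v z p q hx
  have hr : 0 < ‖x‖ := norm_pos_iff.2 hx
  have hB0 : 0 ≤ B := (abs_nonneg _).trans (hB x)
  rw [abs_div, abs_mul, abs_mul, abs_norm, mul_div_assoc]
  refine mul_le_mul (hB x) (le_trans ?_ h2) (by positivity) hB0
  gcongr
  have := mul_le_mul (hwb x) (hyb x) (abs_nonneg _) (nu_nonneg v z x)
  nlinarith [sq_nonneg (nu v z x - gn v z x), mul_nonneg (nu_nonneg v z x) (gn_nonneg v z x)]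

end Sol

/-! ### Energy identities -/

lemma dd_add' {d : ℕ} {f g : Ed d → ℝ} {x : Ed d} (i : Fin d) (hf : DifferentiableAt ℝ f x)
    (hg : DifferentiableAt ℝ g x) : dd (fun y => f y + g y) i x = dd f i x + dd g i x := by
  unfold dd; rw [fderiv_fun_add hf hg]; rfl

lemma dd_sub' {d : ℕ} {f g : Ed d → ℝ} {x : Ed d} (i : Fin d) (hf : DifferentiableAt ℝ f x)
    (hg : DifferentiableAt ℝ g x) : dd (fun y => f y - g y) i x = dd f i x - dd g i x := by
  unfold dd; rw [fderiv_fun_sub hf hg]; rfl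

lemma contDiff_energy {d : ℕ} {b v z : Ed d → ℝ} (hb : ContDiff ℝ 1 b) (hv : ContDiff ℝ 2 v)
    (hz : ContDiff ℝ 2 z) (i : Fin d) : ContDiff ℝ 1 (fun y => b y * (v y * dd z i y)) :=
  hb.mul ((hv.of_le (by norm_num)).mul (contDiff_dd hz i))

namespace Sol

variable {d : ℕ} {γ η ε τ : ℝ} {V v z p q : Ed d → ℝ}

/-- Divergence of `b Re(ū ∇u)`, where `∇b = -c x`. -/
lemma div_re (h : Sol γ η ε τ V v z p q) {b c : Ed d → ℝ} (hb : ContDiff ℝ 1 b)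
    (hbd : ∀ i x, dd b i x = -(c x * x i)) (x : Ed d) :
    ∑ i, dd (fun y => b y * (v y * dd v i y) + b y * (z y * dd z i y)) i x
      = -(c x * (v x * euler v x + z x * euler z x))
        + b x * (gn v z x ^ 2 + (V x - τ) * nu v z x ^ 2 - (p x * v x + q x * z x)) := by
  have h1 := div_energy hb hbd h.hv h.hv x
  have h2 := div_energy hb hbd h.hz h.hz x
  have e : ∀ i, dd (fun y => b y * (v y * dd v i y) + b y * (z y * dd z i y)) i x
      = dd (fun y => b y * (v y * dd v i y)) i x + dd (fun y => b y * (z y * dd z i y)) i x :=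
    fun i => dd_add' i ((contDiff_energy hb h.hv h.hv i).differentiable (by norm_num) x)
      ((contDiff_energy hb h.hz h.hz i).differentiable (by norm_num) x)
  simp only [e, Finset.sum_add_distrib, h1, h2]
  rw [gn_sq, gs_eq, nu_sq, ← h.eqp x, ← h.eqq x]
  simp only [← sq]
  ring

/-- Divergence of `b Im(ū ∇u)`, where `∇b = -c x`. -/
lemma div_im (h : Sol γ η ε τ V v z p q) {b c : Ed d → ℝ} (hb : ContDiff ℝ 1 b)
    (hbd : ∀ i x, dd b i x = -(c x * x i)) (x : Ed d) :
    ∑ i, dd (fun y => b y * (v y * dd z i y) - b y * (z y * dd v i y)) i x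
      = -(c x * (v x * euler z x - z x * euler v x))
        + b x * (ε * nu v z x ^ 2 - (q x * v x - p x * z x)) := by
  have h1 := div_energy hb hbd h.hv h.hz x
  have h2 := div_energy hb hbd h.hz h.hv x
  have e : ∀ i, dd (fun y => b y * (v y * dd z i y) - b y * (z y * dd v i y)) i x
      = dd (fun y => b y * (v y * dd z i y)) i x - dd (fun y => b y * (z y * dd v i y)) i x :=
    fun i => dd_sub' i ((contDiff_energy hb h.hv h.hz i).differentiable (by norm_num) x)
      ((contDiff_energy hb h.hz h.hv i).differentiable (by norm_num) x)
  have e2 : ∑ i, dd z i x * dd v i x = ∑ i, dd v i x * dd z i x :=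
    Finset.sum_congr rfl fun i _ => mul_comm _ _
  simp only [e, Finset.sum_sub_distrib, h1, h2]
  rw [nu_sq, ← h.eqp x, ← h.eqq x, e2]
  ring

lemma re_gen (h : Sol γ η ε τ V v z p q) {b c H Q : Ed d → ℝ} {B : ℝ} (hb : ContDiff ℝ 1 b)
    (hbd : ∀ i x, dd b i x = -(c x * x i)) (hB : ∀ x, |b x| ≤ B) (hQ : Integrable Q)
    (hH : AEMeasurable H) (hH0 : ∀ x, 0 ≤ H x)
    (hle : ∀ x, x ≠ 0 → H x ≤ Q x + (-(c x * (v x * euler v x + z x * euler z x))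
        + b x * (gn v z x ^ 2 + (V x - τ) * nu v z x ^ 2 - (p x * v x + q x * z x)))) :
    ∫⁻ x, ENNReal.ofReal (H x) ≤ ENNReal.ofReal (∫ x, Q x) := by
  refine lintegral_le_of_le_add_div h.dpos
    (P := fun i y => b y * (v y * dd v i y) + b y * (z y * dd z i y))
    (fun i => ((contDiff_energy hb h.hv h.hv i).add (contDiff_energy hb h.hz h.hz i)).contDiffOn)
    (fun i => ?_) hQ hH hH0 fun x hx => ?_
  · simp only [add_div]
    exact (h.i_re i hb.continuous hB h.hv h.hv (abs_le_nu_left v z) (abs_dd_le_gn_left v z i)).add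
      (h.i_re i hb.continuous hB h.hz h.hz (abs_le_nu_right v z) (abs_dd_le_gn_right v z i))
  · rw [h.div_re hb hbd x]; exact hle x hx

lemma im_gen (h : Sol γ η ε τ V v z p q) {b c H Q : Ed d → ℝ} {B : ℝ} (hb : ContDiff ℝ 1 b)
    (hbd : ∀ i x, dd b i x = -(c x * x i)) (hB : ∀ x, |b x| ≤ B) (hQ : Integrable Q)
    (hH : AEMeasurable H) (hH0 : ∀ x, 0 ≤ H x)
    (hle : ∀ x, x ≠ 0 → H x ≤ Q x + (-(c x * (v x * euler z x - z x * euler v x))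
        + b x * (ε * nu v z x ^ 2 - (q x * v x - p x * z x)))) :
    ∫⁻ x, ENNReal.ofReal (H x) ≤ ENNReal.ofReal (∫ x, Q x) := by
  refine lintegral_le_of_le_add_div h.dpos
    (P := fun i y => b y * (v y * dd z i y) - b y * (z y * dd v i y))
    (fun i => ((contDiff_energy hb h.hv h.hz i).sub (contDiff_energy hb h.hz h.hv i)).contDiffOn)
    (fun i => ?_) hQ hH hH0 fun x hx => ?_
  · simp only [sub_div]
    exact (h.i_re i hb.continuous hB h.hv h.hz (abs_le_nu_left v z) (abs_dd_le_gn_right v z i)).sub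
      (h.i_re i hb.continuous hB h.hz h.hv (abs_le_nu_right v z) (abs_dd_le_gn_left v z i))
  · rw [h.div_im hb hbd x]; exact hle x hx

lemma dd_const' {b : ℝ} (i : Fin d) (x : Ed d) :
    dd (fun _ : Ed d => b) i x = -((fun _ => (0:ℝ)) x * x i) := by
  simp [dd]

/-- The energy estimate: `∫ (V|u|² + |∇u|²) ≤ ∫ |f||u| + τ ∫ |u|²`. -/
lemma energy (h : Sol γ η ε τ V v z p q) :
    ∫⁻ x, ENNReal.ofReal (V x * nu v z x ^ 2 + gn v z x ^ 2)
      ≤ ENNReal.ofReal (∫ x, (nu p q x * nu v z x + τ * nu v z x ^ 2)) := by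
  refine h.re_gen (b := fun _ => 1) (c := fun _ => 0) (B := 1) contDiff_const dd_const'
    (by simp) (h.i_fu.add (h.iu.const_mul τ)) ?_ (fun x => ?_) fun x _ => ?_
  · exact (((h.mV.mul (h.mu.pow_const 2)).add (h.mg.pow_const 2))).aemeasurable
  · exact add_nonneg (mul_nonneg (h.V0 x) (sq_nonneg _)) (sq_nonneg _)
  · have := (abs_le.1 (re_pair_le p q v z x)).2
    nlinarith

lemma i_V (h : Sol γ η ε τ V v z p q) : Integrable (fun x => V x * nu v z x ^ 2) := by
  refine ⟨(h.mV.mul (h.mu.pow_const 2)).aestronglyMeasurable, ?_⟩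
  rw [hasFiniteIntegral_iff_ofReal (.of_forall fun x => mul_nonneg (h.V0 x) (sq_nonneg _))]
  refine lt_of_le_of_lt (lintegral_mono fun x => ENNReal.ofReal_le_ofReal ?_)
    (h.energy.trans_lt ENNReal.ofReal_lt_top)
  nlinarith [sq_nonneg (gn v z x)]

/-- `∫ |∇u|² ≤ ∫ |f||u| + τ ∫ |u|²`, with Bochner integrals. -/
lemma int_g_le (h : Sol γ η ε τ V v z p q) :
    ∫ x, gn v z x ^ 2 ≤ (∫ x, nu p q x * nu v z x) + max 0 τ * ∫ x, nu v z x ^ 2 := by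
  have h0 : ∫⁻ x, ENNReal.ofReal (gn v z x ^ 2)
      ≤ ENNReal.ofReal (∫ x, (nu p q x * nu v z x + max 0 τ * nu v z x ^ 2)) := by
    refine le_trans (lintegral_mono fun x => ENNReal.ofReal_le_ofReal ?_)
      (h.energy.trans (ENNReal.ofReal_le_ofReal (integral_mono (h.i_fu.add (h.iu.const_mul τ))
        (h.i_fu.add (h.iu.const_mul _)) fun x => ?_)))
    · nlinarith [mul_nonneg (h.V0 x) (sq_nonneg (nu v z x))]
    · simp only
      gcongr; exact le_max_right _ _
  rw [← ofReal_integral_eq_lintegral_ofReal h.ig (.of_forall fun x => sq_nonneg _)] at h0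
  have hp : 0 ≤ ∫ x, (nu p q x * nu v z x + max 0 τ * nu v z x ^ 2) :=
    integral_nonneg fun x => by
      have := nu_nonneg p q x
      have := nu_nonneg v z x
      have := le_max_left 0 τ
      simp only [Pi.zero_apply]; positivity
  rw [ENNReal.ofReal_le_ofReal_iff hp, integral_add h.i_fu (h.iu.const_mul _),
    integral_const_mul] at h0
  exact h0

/-- Charge estimate with a weight. -/
lemma charge_gen (h : Sol γ η ε τ V v z p q) {b c : Ed d → ℝ} {B : ℝ} (hb : ContDiff ℝ 1 b)
    (hbd : ∀ i x, dd b i x = -(c x * x i)) (hB : ∀ x, |b x| ≤ B) (hb0 : ∀ x, 0 ≤ b x)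
    (hc0 : ∀ x, 0 ≤ c x)
    (hQ : Integrable (fun x => c x * (nu v z x * (‖x‖ * gn v z x))
      + b x * (nu p q x * nu v z x))) :
    ∫⁻ x, ENNReal.ofReal (|ε| * (b x * nu v z x ^ 2)) ≤
      ENNReal.ofReal (∫ x, (c x * (nu v z x * (‖x‖ * gn v z x))
      + b x * (nu p q x * nu v z x))) := by
  have hH : AEMeasurable (fun x => |ε| * (b x * nu v z x ^ 2)) :=
    ((hb.continuous.measurable.mul (h.mu.pow_const 2)).const_mul _).aemeasurable
  have hH0 : ∀ x, 0 ≤ |ε| * (b x * nu v z x ^ 2) := fun x =>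
    mul_nonneg (abs_nonneg _) (mul_nonneg (hb0 x) (sq_nonneg _))
  rcases le_total 0 ε with he | he
  · refine h.im_gen hb hbd hB hQ hH hH0 fun x _ => ?_
    have h1 := mul_le_mul_of_nonneg_left (abs_le.1 (im_pair_le p q v z x)).2 (hb0 x)
    have h2 := mul_le_mul_of_nonneg_left (abs_le.1 (im_euler_le v z x)).2 (hc0 x)
    rw [abs_of_nonneg he]
    linarith
  · refine h.im_gen (b := fun x => -b x) (c := fun x => -c x) hb.neg (fun i x => ?_)
      (fun x => by rw [abs_neg]; exact hB x) hQ hH hH0 fun x _ => ?_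
    · have := hbd i x
      unfold dd at this ⊢
      rw [fderiv_fun_neg, neg_apply, this]; ring
    have h1 := mul_le_mul_of_nonneg_left (abs_le.1 (im_pair_le p q v z x)).1 (hb0 x)
    have h2 := mul_le_mul_of_nonneg_left (abs_le.1 (im_euler_le v z x)).1 (hc0 x)
    rw [abs_of_nonpos he]
    linarith

/-- The charge estimate `|ε| ∫ |u|² ≤ ∫ |f||u|`. -/
lemma int_u_le (h : Sol γ η ε τ V v z p q) :
    |ε| * ∫ x, nu v z x ^ 2 ≤ ∫ x, nu p q x * nu v z x := by
  have h0 := h.charge_gen (b := fun _ => 1) (c := fun _ => 0) (B := 1) contDiff_const dd_const'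
    (by simp) (by simp) (by simp) (by simpa using h.i_fu)
  simp only [one_mul, zero_mul, zero_add] at h0
  rw [← ofReal_integral_eq_lintegral_ofReal (h.iu.const_mul _) (.of_forall fun x => by
    positivity), ENNReal.ofReal_le_ofReal_iff (integral_nonneg fun x =>
      mul_nonneg (nu_nonneg _ _ _) (nu_nonneg _ _ _)), integral_const_mul] at h0
  exact h0

end Sol

/-- The weight `δ² (δ² + |x|²)^{-3/2}`, comparable with `δ⁻¹` on the ball of radius `δ`. -/
def ew {d : ℕ} (δ : ℝ) (x : Ed d) : ℝ := δ ^ 2 * aw δ x ^ 3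

/-- `∇(ew δ) = -(fw δ) x`. -/
def fw {d : ℕ} (δ : ℝ) (x : Ed d) : ℝ := 3 * δ ^ 2 * aw δ x ^ 5

lemma aw_le_inv {d : ℕ} {δ : ℝ} (hδ : 0 < δ) (x : Ed d) : aw δ x ≤ 1 / δ := by
  rw [le_div_iff₀ hδ]; exact aw_mul_le hδ x

lemma aw_le_inv_norm {d : ℕ} {δ : ℝ} (hδ : 0 < δ) {x : Ed d} (hx : x ≠ 0) : aw δ x ≤ 1 / ‖x‖ := by
  rw [le_div_iff₀ (norm_pos_iff.2 hx)]; exact aw_mul_norm_le hδ x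

lemma ew_nonneg {d : ℕ} {δ : ℝ} (hδ : 0 < δ) (x : Ed d) : 0 ≤ ew δ x := by
  have := aw_pos hδ x; unfold ew; positivity

lemma fw_nonneg {d : ℕ} {δ : ℝ} (hδ : 0 < δ) (x : Ed d) : 0 ≤ fw δ x := by
  have := aw_pos hδ x; unfold fw; positivity

lemma ew_le_aw {d : ℕ} {δ : ℝ} (hδ : 0 < δ) (x : Ed d) : ew δ x ≤ aw δ x := by
  have h1 := aw_mul_le hδ x
  have h2 := aw_pos hδ x
  have : (aw δ x * δ) ^ 2 ≤ 1 := pow_le_one₀ (by positivity) h1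
  calc ew δ x = aw δ x * (aw δ x * δ) ^ 2 := by unfold ew; ring
    _ ≤ aw δ x * 1 := by gcongr
    _ = _ := mul_one _

lemma fw_mul_norm_le {d : ℕ} {δ : ℝ} (hδ : 0 < δ) (x : Ed d) : fw δ x * ‖x‖ ≤ 3 * (ew δ x * aw δ x) := by
  have h1 := aw_mul_norm_le hδ x
  have h2 := aw_pos hδ x
  calc fw δ x * ‖x‖ = 3 * (ew δ x * aw δ x) * (aw δ x * ‖x‖) := by unfold fw ew; ring
    _ ≤ 3 * (ew δ x * aw δ x) * 1 := by
      have := ew_nonneg hδ x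
      gcongr
    _ = _ := mul_one _

lemma contDiff_ew {d : ℕ} {δ : ℝ} (hδ : 0 < δ) : ContDiff ℝ 1 (ew δ : Ed d → ℝ) := by
  unfold ew
  exact contDiff_const.mul ((contDiff_aw hδ).pow 3)

lemma dd_ew {d : ℕ} {δ : ℝ} (hδ : 0 < δ) (i : Fin d) (x : Ed d) : dd (ew δ) i x = -(fw δ x * x i) := by
  refine dd_eq_of_hasDerivAt ((contDiff_ew hδ).differentiable (by norm_num) x) ?_
  refine hasDerivAt_congr (((hasDerivAt_line_aw hδ x i).pow 3).const_mul (δ ^ 2))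
    (fun s => by simp [ew]) ?_
  simp [fw]; ring

/-! ### The multiplier estimate -/

lemma bw_nonneg {d : ℕ} {δ : ℝ} (hδ : 0 < δ) (hd : 0 < d) (x : Ed d) : 0 ≤ bw δ x := by
  have h1 : (1:ℝ) ≤ d := by exact_mod_cast hd
  have := aw_pos hδ x
  have : 0 ≤ (d:ℝ) - 1 := by linarith
  unfold bw; positivity

lemma bw_le {d : ℕ} {δ : ℝ} (hδ : 0 < δ) (x : Ed d) : bw δ x ≤ d / 2 * aw δ x := by
  have h := ew_le_aw hδ x
  unfold ew at h; unfold bw; linarith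

lemma cw_nonneg {d : ℕ} {δ : ℝ} (hδ : 0 < δ) (hd : 0 < d) (x : Ed d) : 0 ≤ cw δ x := by
  have h1 : (1:ℝ) ≤ d := by exact_mod_cast hd
  have := aw_pos hδ x
  have : 0 ≤ (d:ℝ) - 1 := by linarith
  unfold cw; positivity

lemma cw_le {d : ℕ} {δ : ℝ} (hδ : 0 < δ) (x : Ed d) :
    cw δ x ≤ (d + 2) / 2 * (1 / δ) ^ 3 := by
  have h := ew_le_aw hδ x
  have h0 := aw_pos hδ x
  have h1 : aw δ x ^ 3 ≤ (1 / δ) ^ 3 := pow_le_pow_left₀ h0.le (aw_le_inv hδ x) 3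
  have h2 : δ ^ 2 * aw δ x ^ 5 ≤ aw δ x ^ 3 := by
    calc δ ^ 2 * aw δ x ^ 5 = ew δ x * aw δ x ^ 2 := by unfold ew; ring
      _ ≤ aw δ x * aw δ x ^ 2 := by gcongr
      _ = _ := by ring
  have h3 : ((d:ℝ) + 2) / 2 * aw δ x ^ 3 ≤ (d + 2) / 2 * (1 / δ) ^ 3 := by gcongr
  unfold cw; linarith

lemma euler_sub_const {d : ℕ} (V : Ed d → ℝ) (τ : ℝ) (x : Ed d) :
    euler (fun y => V y - τ) x = euler V x := by
  simp only [euler, dd, fderiv_sub_const]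

lemma contDiff_coord {d : ℕ} (i : Fin d) {n : WithTop ℕ∞} :
    ContDiff ℝ n (fun x : Ed d => x i) := by fun_prop

lemma contDiff_euler {d : ℕ} {v : Ed d → ℝ} (hv : ContDiff ℝ 2 v) : ContDiff ℝ 1 (euler v) := by
  unfold euler
  exact ContDiff.sum fun i _ => (contDiff_coord i).mul (contDiff_dd hv i)

lemma contDiffOn_flux {d : ℕ} {δ : ℝ} (hδ : 0 < δ) {Z v : Ed d → ℝ} (hv : ContDiff ℝ 2 v)
    {s : Set (Ed d)} (hZ : ContDiffOn ℝ 1 Z s) (i : Fin d) :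
    ContDiffOn ℝ 1 (flux δ Z v i) s := by
  have ha : ContDiff ℝ 1 (aw δ : Ed d → ℝ) := contDiff_aw hδ
  have hv1 : ContDiff ℝ 1 v := hv.of_le (by norm_num)
  have hdv := fun j => contDiff_dd hv j
  have hE := contDiff_euler hv
  have hS : ContDiff ℝ 1 (fun x => ∑ j, dd v j x ^ 2) := ContDiff.sum fun j _ => (hdv j).pow 2
  have hx : ContDiff ℝ 1 (fun x : Ed d => x i) := contDiff_coord i
  have hb : ContDiff ℝ 1 (bw δ : Ed d → ℝ) := by
    unfold bw
    exact ((contDiff_const.mul ha).add (contDiff_const.mul (ha.pow 3))).div_const _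
  have hc : ContDiff ℝ 1 (cw δ : Ed d → ℝ) := by
    unfold cw
    exact ((contDiff_const.mul (ha.pow 3)).add (contDiff_const.mul (ha.pow 5))).div_const _
  unfold flux
  refine ContDiffOn.sub (ContDiff.contDiffOn ?_) ?_
  · exact (((hb.mul (hv1.mul (hdv i))).add (((hc.mul hx).mul (hv1.pow 2)).div_const 2)).add
      (ha.mul ((hdv i).mul hE))).sub (((ha.mul hx).mul hS).div_const 2)
  · exact (hZ.mul (ha.mul (hx.mul (hv1.pow 2))).contDiffOn).div_const 2

namespace Sol

variable {d : ℕ} {γ η ε τ : ℝ} {V v z p q : Ed d → ℝ}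

lemma i_flux (h : Sol γ η ε τ V v z p q) {δ : ℝ} (hδ : 0 < δ) {w : Ed d → ℝ}
    (hw : ContDiff ℝ 2 w) (h1 : ∀ x, |w x| ≤ nu v z x) (h2 : ∀ i x, |dd w i x| ≤ gn v z x)
    (h3 : ∀ x, |euler w x| ≤ ‖x‖ * gn v z x) (h4 : ∀ x, ∑ j, dd w j x ^ 2 ≤ gn v z x ^ 2)
    (i : Fin d) : Integrable (fun x => flux δ (fun y => V y - τ) w i x / ‖x‖) := by
  have hm : Measurable (flux δ (fun y => V y - τ) w i) :=
    measurable_of_continuousOn_compl_singleton 0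
      (contDiffOn_flux hδ hw (h.VC.sub contDiffOn_const) i).continuousOn
  refine ((h.integrable_dom.const_mul (d / 2 * (1 / δ) + (d + 2) / 2 * (1 / δ) ^ 3
    + 1 / δ + 1 / δ + |τ| * (1 / δ))).add (h.i_V.const_mul (1 / δ))).mono'
    (hm.div (by fun_prop)).aestronglyMeasurable ?_
  filter_upwards [ae_ne_zero h.dpos] with x hx
  obtain ⟨-, d0, d1, -, -⟩ := dom_facts v z p q hx
  have hr : 0 < ‖x‖ := norm_pos_iff.2 hx
  have hxi : |x i| ≤ ‖x‖ := by simpa using PiLp.norm_apply_le x i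
  have ha := aw_le_inv hδ x
  have ha0 := aw_pos hδ x
  have hb0 := bw_nonneg hδ h.dpos x
  have hb : bw δ x ≤ d / 2 * (1 / δ) := (bw_le hδ x).trans (by gcongr)
  have hc0 := cw_nonneg hδ h.dpos x
  have hc := cw_le hδ x
  have hV := h.V0 x
  have hn := nu_nonneg v z x
  have hg := gn_nonneg v z x
  have hS : 0 ≤ ∑ j, dd w j x ^ 2 := Finset.sum_nonneg fun j _ => sq_nonneg _
  have hw2 : w x ^ 2 ≤ nu v z x ^ 2 := by rw [← sq_abs]; gcongr; exact h1 x
  have k1 : |bw δ x * (w x * dd w i x)| ≤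
      d / 2 * (1 / δ) * dom v z p q x * ‖x‖ := by
    rw [abs_mul, abs_mul, abs_of_nonneg hb0, mul_assoc]
    have e : nu v z x * gn v z x ≤ dom v z p q x * ‖x‖ := by
      rw [div_le_iff₀ hr] at d1
      nlinarith [sq_nonneg (nu v z x - gn v z x), mul_nonneg hn hg]
    exact mul_le_mul hb ((mul_le_mul (h1 x) (h2 i x) (abs_nonneg _) hn).trans e)
      (by positivity) (by positivity)
  have k2 : |cw δ x * x i * w x ^ 2 / 2| ≤
      (d + 2) / 2 * (1 / δ) ^ 3 * dom v z p q x * ‖x‖ := by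
    rw [abs_div, abs_mul, abs_mul, abs_of_nonneg hc0, abs_of_nonneg (sq_nonneg (w x)), abs_two]
    have e : w x ^ 2 ≤ dom v z p q x := by nlinarith [sq_nonneg (gn v z x)]
    have : cw δ x * |x i| * w x ^ 2 ≤
        (d + 2) / 2 * (1 / δ) ^ 3 * ‖x‖ * dom v z p q x := by gcongr
    have h0 : 0 ≤ cw δ x * |x i| * w x ^ 2 := by positivity
    nlinarith
  have k3 : |aw δ x * (dd w i x * euler w x)| ≤ 1 / δ * dom v z p q x * ‖x‖ := by
    rw [abs_mul, abs_mul, abs_of_pos ha0, mul_assoc]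
    have e : gn v z x ^ 2 ≤ dom v z p q x := by nlinarith [sq_nonneg (nu v z x)]
    have e2 : |dd w i x| * |euler w x| ≤ gn v z x * (‖x‖ * gn v z x) :=
      mul_le_mul (h2 i x) (h3 x) (abs_nonneg _) hg
    refine mul_le_mul ha (e2.trans ?_) (by positivity) (by positivity)
    nlinarith [mul_le_mul_of_nonneg_right e hr.le]
  have k4 : |aw δ x * x i * (∑ j, dd w j x ^ 2) / 2| ≤ 1 / δ * dom v z p q x * ‖x‖ := by
    rw [abs_div, abs_mul, abs_mul, abs_of_pos ha0, abs_of_nonneg hS, abs_two]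
    have e : ∑ j, dd w j x ^ 2 ≤ dom v z p q x := by
      nlinarith [sq_nonneg (nu v z x), h4 x]
    have : aw δ x * |x i| * (∑ j, dd w j x ^ 2) ≤ 1 / δ * ‖x‖ * dom v z p q x := by gcongr
    have h0 : 0 ≤ aw δ x * |x i| * (∑ j, dd w j x ^ 2) := by positivity
    nlinarith
  have k5 : |(V x - τ) * (aw δ x * (x i * w x ^ 2)) / 2| ≤
      |τ| * (1 / δ) * dom v z p q x * ‖x‖ + 1 / δ * (V x * nu v z x ^ 2) * ‖x‖ := by
    rw [abs_div, abs_mul, abs_mul, abs_mul, abs_of_pos ha0, abs_of_nonneg (sq_nonneg (w x)),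
      abs_two]
    have e : nu v z x ^ 2 ≤ dom v z p q x := by nlinarith [sq_nonneg (gn v z x)]
    have t1 : |V x - τ| ≤ V x + |τ| := (abs_sub _ _).trans (by rw [abs_of_nonneg hV])
    have : |V x - τ| * (aw δ x * (|x i| * w x ^ 2)) ≤
        (V x + |τ|) * (1 / δ * (‖x‖ * nu v z x ^ 2)) := by gcongr
    have t2 : |τ| * (1 / δ) * ‖x‖ * nu v z x ^ 2 ≤ |τ| * (1 / δ) * ‖x‖ * dom v z p q x := by
      gcongr
    have h0 : 0 ≤ |V x - τ| * (aw δ x * (|x i| * w x ^ 2)) := by positivity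
    nlinarith
  rw [Real.norm_eq_abs, abs_div, abs_norm, div_le_iff₀ hr]
  have hab : ∀ a b c e f : ℝ, |a + b + c - e - f| ≤ |a| + |b| + |c| + |e| + |f| := by
    intro a b c e f
    refine (abs_sub _ _).trans ?_
    gcongr
    refine (abs_sub _ _).trans ?_
    gcongr
    exact abs_add_three _ _ _
  unfold flux
  refine (hab _ _ _ _ _).trans ?_
  simp only [Pi.add_apply]
  linarith

/-- The right-hand side of the multiplier estimate,
`∫ |f||∇u| + (d/2) ∫ |f||u|/|x| + |ε| ∫ |u||∇u|`. -/
def rhs {d : ℕ} (ε : ℝ) (v z p q : Ed d → ℝ) : ℝ :=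
  (∫ x, nu p q x * gn v z x) + d / 2 * (∫ x, nu p q x * nu v z x / ‖x‖)
    + |ε| * ∫ x, nu v z x * gn v z x

/-- The Hardy constant `(d-1)(d-3)/4`. -/
def kap (d : ℕ) : ℝ := ((d:ℝ) - 1) * ((d:ℝ) - 3) / 4

lemma kap_pos (h : Sol γ η ε τ V v z p q) : 0 < kap d := by
  have := h.d4
  unfold kap
  have h1 : 0 < (d:ℝ) - 1 := by linarith
  have h2 : 0 < (d:ℝ) - 3 := by linarith
  positivity

lemma aw_gap {δ : ℝ} (hδ : 0 < δ) {x : Ed d} (hx : x ≠ 0) :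
    0 ≤ aw δ x / ‖x‖ ^ 2 - aw δ x ^ 3 ∧ aw δ x / ‖x‖ ^ 2 - aw δ x ^ 3 ≤ 1 / ‖x‖ ^ 3 := by
  have hr : 0 < ‖x‖ := norm_pos_iff.2 hx
  have h0 := aw_pos hδ x
  have h1 := aw_le_inv_norm hδ hx
  constructor
  · have : aw δ x * aw δ x ^ 2 ≤ aw δ x * (1 / ‖x‖) ^ 2 := by gcongr
    have e : aw δ x / ‖x‖ ^ 2 = aw δ x * (1 / ‖x‖) ^ 2 := by rw [div_pow, one_pow]; ring
    rw [e]; nlinarith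
  · have : aw δ x * (1 / ‖x‖) ^ 2 ≤ 1 / ‖x‖ * (1 / ‖x‖) ^ 2 := by gcongr
    have e : aw δ x / ‖x‖ ^ 2 = aw δ x * (1 / ‖x‖) ^ 2 := by rw [div_pow, one_pow]; ring
    have e2 : 1 / ‖x‖ ^ 3 = 1 / ‖x‖ * (1 / ‖x‖) ^ 2 := by rw [div_pow, one_pow]; ring
    rw [e, e2]; have : 0 < aw δ x ^ 3 := by positivity
    linarith

lemma i_gap (h : Sol γ η ε τ V v z p q) {δ : ℝ} (hδ : 0 < δ) :
    Integrable (fun x => (aw δ x / ‖x‖ ^ 2 - aw δ x ^ 3) * nu v z x ^ 2) := by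
  have ha : Measurable (aw δ : Ed d → ℝ) := (contDiff_aw hδ (n := 0)).continuous.measurable
  have hu := h.mu
  refine h.i_u3.mono' (by fun_prop) ?_
  filter_upwards [ae_ne_zero h.dpos] with x hx
  obtain ⟨h1, h2⟩ := aw_gap hδ hx
  rw [Real.norm_eq_abs, abs_of_nonneg (mul_nonneg h1 (sq_nonneg _))]
  calc _ ≤ 1 / ‖x‖ ^ 3 * nu v z x ^ 2 := by gcongr
    _ = _ := by ring

/-- The Morawetz estimate for the multiplier `(δ² + |x|²)^{-1/2} x·∇u + (bw δ) u`. -/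
lemma morawetz (h : Sol γ η ε τ V v z p q) {δ : ℝ} (hδ : 0 < δ) :
    ∫⁻ x, ENNReal.ofReal (ew δ x * gn v z x ^ 2 + γ / 2 * (V x * nu v z x ^ 2) * aw δ x
        + η * kap d * nu v z x ^ 2 * (aw δ x / ‖x‖ ^ 2))
      ≤ ENNReal.ofReal (rhs ε v z p q
        + kap d * ∫ x, (aw δ x / ‖x‖ ^ 2 - aw δ x ^ 3) * nu v z x ^ 2) := by
  have ha : Measurable (aw δ : Ed d → ℝ) := (contDiff_aw hδ (n := 0)).continuous.measurable
  have he : Measurable (ew δ : Ed d → ℝ) := (contDiff_ew hδ).continuous.measurable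
  have hu := h.mu
  have hgm := h.mg
  have hV := h.mV
  have hk := h.kap_pos
  have hη := h.hη
  have hγ := h.hγ
  have eQ : rhs ε v z p q + kap d * ∫ x, (aw δ x / ‖x‖ ^ 2 - aw δ x ^ 3) * nu v z x ^ 2
      = ∫ x, (((nu p q x * gn v z x + d / 2 * (nu p q x * nu v z x / ‖x‖))
        + |ε| * (nu v z x * gn v z x))
        + kap d * ((aw δ x / ‖x‖ ^ 2 - aw δ x ^ 3) * nu v z x ^ 2)) := by
    rw [integral_add, integral_add, integral_add, integral_const_mul, integral_const_mul,
      integral_const_mul, rhs]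
    · exact h.i_fg
    · exact h.i_fur.const_mul _
    · exact h.i_fg.add (h.i_fur.const_mul _)
    · exact h.i_ug.const_mul _
    · exact (h.i_fg.add (h.i_fur.const_mul _)).add (h.i_ug.const_mul _)
    · exact (h.i_gap hδ).const_mul _
  rw [eQ]
  have hZ : ContDiffOn ℝ 1 (fun y => V y - τ) {0}ᶜ := h.VC.sub contDiffOn_const
  refine lintegral_le_of_le_add_div h.dpos
    (P := fun i x => flux δ (fun y => V y - τ) v i x + flux δ (fun y => V y - τ) z i x)
    (fun i => (contDiffOn_flux hδ h.hv hZ i).add (contDiffOn_flux hδ h.hz hZ i))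
    (fun i => ?_)
    (((h.i_fg.add (h.i_fur.const_mul _)).add (h.i_ug.const_mul _)).add
      ((h.i_gap hδ).const_mul _)) (by fun_prop) (fun x => ?_) fun x hx => ?_
  · simp only [add_div]
    refine (h.i_flux hδ h.hv (abs_le_nu_left v z) (abs_dd_le_gn_left v z) (abs_euler_le v z)
      (fun x => ?_) i).add (h.i_flux hδ h.hz (abs_le_nu_right v z) (abs_dd_le_gn_right v z)
      (fun x => ?_) (fun x => ?_) i)
    · rw [gn_sq, gs_eq]
      exact le_add_of_nonneg_right (Finset.sum_nonneg fun j _ => sq_nonneg _)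
    · rw [gn_swap]; exact abs_euler_le z v x
    · rw [gn_sq, gs_eq]
      exact le_add_of_nonneg_left (Finset.sum_nonneg fun j _ => sq_nonneg _)
  · have := aw_pos hδ x
    have := ew_nonneg hδ x
    have := h.V0 x
    positivity
  · have hr : 0 < ‖x‖ := norm_pos_iff.2 hx
    have hxm : ({0}ᶜ : Set (Ed d)) ∈ nhds x := isOpen_compl_singleton.mem_nhds hx
    have hZx : DifferentiableAt ℝ (fun y => V y - τ) x :=
      (hZ.contDiffAt hxm).differentiableAt (by norm_num)
    have e : ∀ i, dd (fun x => flux δ (fun y => V y - τ) v i x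
          + flux δ (fun y => V y - τ) z i x) i x
        = dd (flux δ (fun y => V y - τ) v i) i x + dd (flux δ (fun y => V y - τ) z i) i x :=
      fun i => dd_add' i
        (((contDiffOn_flux hδ h.hv hZ i).contDiffAt hxm).differentiableAt (by norm_num))
        (((contDiffOn_flux hδ h.hz hZ i).contDiffAt hxm).differentiableAt (by norm_num))
    simp only [e, Finset.sum_add_distrib]
    rw [div_flux hδ h.hv hZx, div_flux hδ h.hz hZx, euler_sub_const]
    have e1 : -rlap v x + (V x - τ) * v x = p x + ε * z x := by linarith [h.eqp x]
    have e2 : -rlap z x + (V x - τ) * z x = q x - ε * v x := by linarith [h.eqq x]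
    rw [e1, e2]
    have ha0 := aw_pos hδ x
    have har := aw_mul_norm_le hδ x
    have hai := aw_le_inv_norm hδ hx
    have hb0 := bw_nonneg hδ h.dpos x
    have hb := bw_le hδ x
    have hsq := aw_sq hδ x
    have hn := nu_nonneg v z x
    have hf := nu_nonneg p q x
    have hg := gn_nonneg v z x
    have hU := nu_sq v z x
    have hG : gn v z x ^ 2 = ∑ j, dd v j x ^ 2 + ∑ j, dd z j x ^ 2 := by rw [gn_sq, gs_eq]
    -- the inhomogeneous term
    have t1 : aw δ x * (p x * euler v x + q x * euler z x) ≤ nu p q x * gn v z x := by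
      have := (plane_cs (p x) (q x) (euler v x) (euler z x)).trans
        (mul_le_mul_of_nonneg_left (sqrt_euler_le v z x) hf)
      calc aw δ x * (p x * euler v x + q x * euler z x)
          ≤ aw δ x * (nu p q x * (‖x‖ * gn v z x)) := by gcongr; exact this
        _ = (aw δ x * ‖x‖) * (nu p q x * gn v z x) := by ring
        _ ≤ 1 * (nu p q x * gn v z x) := by gcongr
        _ = _ := one_mul _
    have t2 : bw δ x * (p x * v x + q x * z x) ≤ d / 2 * (nu p q x * nu v z x / ‖x‖) := by
      have := (abs_le.1 (re_pair_le p q v z x)).2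
      calc bw δ x * (p x * v x + q x * z x) ≤ bw δ x * (nu p q x * nu v z x) := by gcongr
        _ ≤ (d / 2 * (1 / ‖x‖)) * (nu p q x * nu v z x) := by
          gcongr; exact hb.trans (by gcongr)
        _ = _ := by ring
    have t3 : -(aw δ x * (ε * (v x * euler z x - z x * euler v x)))
        ≤ |ε| * (nu v z x * gn v z x) := by
      refine (neg_le_abs _).trans ?_
      rw [abs_mul, abs_mul, abs_of_pos ha0]
      calc aw δ x * (|ε| * |v x * euler z x - z x * euler v x|)
          ≤ aw δ x * (|ε| * (nu v z x * (‖x‖ * gn v z x))) := by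
            gcongr; exact im_euler_le v z x
        _ = (aw δ x * ‖x‖) * (|ε| * (nu v z x * gn v z x)) := by ring
        _ ≤ 1 * (|ε| * (nu v z x * gn v z x)) := by gcongr
        _ = _ := one_mul _
    -- convexity of the weight
    have t4 : ew δ x * gn v z x ^ 2 ≤ aw δ x * gn v z x ^ 2
        - aw δ x ^ 3 * (euler v x ^ 2 + euler z x ^ 2) := by
      have h1 := euler_pair_le v z x
      rw [← gn_sq] at h1
      have h2 : aw δ x ^ 3 * (euler v x ^ 2 + euler z x ^ 2)
          ≤ aw δ x ^ 3 * (‖x‖ ^ 2 * gn v z x ^ 2) := by gcongr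
      have h3 : ew δ x * gn v z x ^ 2
          = aw δ x * (aw δ x ^ 2 * (δ ^ 2 + ‖x‖ ^ 2)) * gn v z x ^ 2
            - aw δ x ^ 3 * (‖x‖ ^ 2 * gn v z x ^ 2) := by unfold ew; ring
      rw [h3, hsq]; linarith
    -- repulsivity of the potential
    have t5 : γ / 2 * (V x * nu v z x ^ 2) * aw δ x + η * kap d * nu v z x ^ 2 * (aw δ x / ‖x‖ ^ 2)
        - kap d * (aw δ x / ‖x‖ ^ 2) * nu v z x ^ 2
        ≤ - (aw δ x * euler V x * nu v z x ^ 2 / 2) := by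
      have h1 := mul_le_mul_of_nonneg_left (h.rep x hx)
        (by positivity : 0 ≤ aw δ x * nu v z x ^ 2 / 2)
      have h2 : aw δ x * nu v z x ^ 2 / 2 *
          ((1 - η) * ((d:ℝ) - 1) * ((d:ℝ) - 3) / (2 * ‖x‖ ^ 2))
          = (1 - η) * kap d * nu v z x ^ 2 * (aw δ x / ‖x‖ ^ 2) := by
        unfold kap; field_simp; ring
      rw [h2] at h1
      linarith
    have t6 : 0 ≤ (6 * ((d:ℝ) - 3) * δ ^ 2 * aw δ x ^ 5 + 15 * δ ^ 4 * aw δ x ^ 7) / 4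
        * nu v z x ^ 2 := by
      have : 0 ≤ (d:ℝ) - 3 := by linarith [h.d4]
      positivity
    have t7 : (((d:ℝ) - 1) * ((d:ℝ) - 3) * aw δ x ^ 3 + 6 * ((d:ℝ) - 3) * δ ^ 2 * aw δ x ^ 5
          + 15 * δ ^ 4 * aw δ x ^ 7) / 4 * nu v z x ^ 2 = kap d * aw δ x ^ 3 * nu v z x ^ 2 +
        (6 * ((d:ℝ) - 3) * δ ^ 2 * aw δ x ^ 5 + 15 * δ ^ 4 * aw δ x ^ 7) / 4
        * nu v z x ^ 2 := by unfold kap; ring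
    rw [hU] at t5 t6 t7 ⊢
    rw [hG] at t4 ⊢
    linarith

end Sol
/-! ### Consequences of the multiplier estimate -/

lemma aw_zero_tendsto {d : ℕ} {x : Ed d} (hx : x ≠ 0) :
    Filter.Tendsto (fun n : ℕ => aw (1 / ((n:ℝ) + 1)) x) Filter.atTop (nhds (1 / ‖x‖)) := by
  have hr : 0 < ‖x‖ := norm_pos_iff.2 hx
  have h1 : Filter.Tendsto (fun n : ℕ => (√((1 / ((n:ℝ) + 1)) ^ 2 + ‖x‖ ^ 2))⁻¹) Filter.atTop
      (nhds (√((0:ℝ) ^ 2 + ‖x‖ ^ 2))⁻¹) := by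
    refine Filter.Tendsto.inv₀ ?_ (by positivity)
    exact (Real.continuous_sqrt.tendsto _).comp
      (((tendsto_one_div_add_atTop_nhds_zero_nat (𝕜 := ℝ)).pow 2).add_const _)
  have h2 : (√((0:ℝ) ^ 2 + ‖x‖ ^ 2))⁻¹ = 1 / ‖x‖ := by
    rw [zero_pow two_ne_zero, zero_add, Real.sqrt_sq hr.le, one_div]
  rw [h2] at h1
  exact h1

lemma ew_ball {d : ℕ} {R : ℝ} (hR : 0 < R) {x : Ed d} (hx : x ∈ ball (0 : Ed d) R) :
    R⁻¹ ≤ 3 * ew R x := by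
  have hr : ‖x‖ < R := by simpa using hx
  have h0 := aw_pos hR x
  have h1 := aw_sq hR x
  have h2 : ‖x‖ ^ 2 ≤ R ^ 2 := by gcongr
  set t := aw R x * R with ht
  have t0 : 0 < t := by positivity
  have t2 : 1 / 2 ≤ t ^ 2 := by
    have : aw R x ^ 2 * (R ^ 2 + ‖x‖ ^ 2) ≤ aw R x ^ 2 * (R ^ 2 + R ^ 2) := by gcongr
    rw [ht, mul_pow]; linarith
  have t1 : 7 / 10 ≤ t := by nlinarith
  have t3 : 1 ≤ 3 * t ^ 3 := by nlinarith
  rw [inv_eq_one_div, div_le_iff₀ hR]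
  calc (1:ℝ) ≤ 3 * t ^ 3 := t3
    _ = 3 * ew R x * R := by unfold ew; rw [ht]; ring

lemma nX2_le_of_ew {d : ℕ} {h : Ed d → ℝ} (h0 : ∀ x, 0 ≤ h x) {A : ℝ≥0∞}
    (hA : ∀ R, 0 < R → ∫⁻ x, ENNReal.ofReal (ew R x * h x) ≤ A) :
    nX2 (fun x => ENNReal.ofReal (h x)) ≤ 3 * A := by
  refine iSup₂_le fun R hR => ?_
  rw [← ENNReal.ofReal_inv_of_pos hR, ← lintegral_const_mul' _ _ ENNReal.ofReal_ne_top]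
  calc ∫⁻ x in ball 0 R, ENNReal.ofReal R⁻¹ * ENNReal.ofReal (h x)
      ≤ ∫⁻ x in ball 0 R, 3 * ENNReal.ofReal (ew R x * h x) := by
        refine setLIntegral_mono' measurableSet_ball fun x hx => ?_
        rw [← ENNReal.ofReal_mul (by positivity), show (3:ℝ≥0∞) = ENNReal.ofReal 3 by simp,
          ← ENNReal.ofReal_mul (by norm_num)]
        refine ENNReal.ofReal_le_ofReal ?_
        rw [← mul_assoc]
        exact mul_le_mul_of_nonneg_right (ew_ball hR hx) (h0 x)
    _ ≤ ∫⁻ x, 3 * ENNReal.ofReal (ew R x * h x) := setLIntegral_le_lintegral _ _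
    _ = 3 * ∫⁻ x, ENNReal.ofReal (ew R x * h x) := lintegral_const_mul' _ _ (by simp)
    _ ≤ 3 * A := by gcongr; exact hA R hR

lemma integrable_of_lintegral_le {d : ℕ} {F : Ed d → ℝ} (hm : Measurable F) (h0 : ∀ x, 0 ≤ F x)
    {A : ℝ} (hA : 0 ≤ A) (h : ∫⁻ x, ENNReal.ofReal (F x) ≤ ENNReal.ofReal A) :
    Integrable F ∧ ∫ x, F x ≤ A := by
  have hi : Integrable F := ⟨hm.aestronglyMeasurable, by
    rw [hasFiniteIntegral_iff_ofReal (.of_forall h0)]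
    exact h.trans_lt ENNReal.ofReal_lt_top⟩
  refine ⟨hi, ?_⟩
  rwa [← ofReal_integral_eq_lintegral_ofReal hi (.of_forall h0),
    ENNReal.ofReal_le_ofReal_iff hA] at h

namespace Sol

variable {d : ℕ} {γ η ε τ : ℝ} {V v z p q : Ed d → ℝ}

lemma int_fur_nonneg : 0 ≤ ∫ x, nu p q x * nu v z x / ‖x‖ := integral_nonneg fun _ =>
  div_nonneg (mul_nonneg (nu_nonneg _ _ _) (nu_nonneg _ _ _)) (norm_nonneg _)

lemma int_fg_nonneg : 0 ≤ ∫ x, nu p q x * gn v z x := integral_nonneg fun _ =>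
  mul_nonneg (nu_nonneg _ _ _) (gn_nonneg _ _ _)

lemma int_ug_nonneg : 0 ≤ ∫ x, nu v z x * gn v z x := integral_nonneg fun _ =>
  mul_nonneg (nu_nonneg _ _ _) (gn_nonneg _ _ _)

lemma rhs_nonneg : 0 ≤ rhs ε v z p q := by
  have h1 := int_fur_nonneg (v := v) (z := z) (p := p) (q := q)
  have h2 := int_fg_nonneg (v := v) (z := z) (p := p) (q := q)
  have h3 := int_ug_nonneg (v := v) (z := z)
  unfold rhs; positivity

lemma int_fur_le (h : Sol γ η ε τ V v z p q) :
    ∫ x, nu p q x * nu v z x / ‖x‖ ≤ rhs ε v z p q := by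
  have h1 := int_fur_nonneg (v := v) (z := z) (p := p) (q := q)
  have h2 := int_fg_nonneg (v := v) (z := z) (p := p) (q := q)
  have h3 := mul_nonneg (abs_nonneg ε) (int_ug_nonneg (v := v) (z := z))
  have h4 := h.d4
  unfold rhs
  nlinarith

/-- The limit `δ → 0` of the multiplier estimate. -/
lemma hardy (h : Sol γ η ε τ V v z p q) :
    ∫⁻ x, ENNReal.ofReal (γ / 2 * (V x * nu v z x ^ 2) * (1 / ‖x‖)
        + η * kap d * nu v z x ^ 2 * (1 / ‖x‖ / ‖x‖ ^ 2)) ≤ ENNReal.ofReal (rhs ε v z p q) := by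
  have hu := h.mu
  have hV := h.mV
  have hδ : ∀ n : ℕ, (0:ℝ) < 1 / ((n:ℝ) + 1) := fun n => by positivity
  have ha : ∀ n : ℕ, Measurable (aw (1 / ((n:ℝ) + 1)) : Ed d → ℝ) := fun n =>
    (contDiff_aw (hδ n) (n := 0)).continuous.measurable
  set F : ℕ → Ed d → ℝ≥0∞ := fun n x => ENNReal.ofReal
    (γ / 2 * (V x * nu v z x ^ 2) * aw (1 / ((n:ℝ) + 1)) x
        + η * kap d * nu v z x ^ 2 * (aw (1 / ((n:ℝ) + 1)) x / ‖x‖ ^ 2)) with hF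
  have hFm : ∀ n, Measurable (F n) := fun n => by
    have := ha n
    simp only [hF]; fun_prop
  have hlim : ∀ᵐ x : Ed d, Filter.liminf (fun n => F n x) Filter.atTop
      = ENNReal.ofReal (γ / 2 * (V x * nu v z x ^ 2) * (1 / ‖x‖)
        + η * kap d * nu v z x ^ 2 * (1 / ‖x‖ / ‖x‖ ^ 2)) := by
    filter_upwards [ae_ne_zero h.dpos] with x hx
    refine Filter.Tendsto.liminf_eq ?_
    have := aw_zero_tendsto hx
    exact (ENNReal.continuous_ofReal.tendsto _).comp
      ((this.const_mul _).add ((this.div_const _).const_mul _))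
  rw [← lintegral_congr_ae hlim]
  refine (lintegral_liminf_le hFm).trans ?_
  have hG : Filter.Tendsto (fun n : ℕ => ∫ x, (aw (1 / ((n:ℝ) + 1)) x / ‖x‖ ^ 2
      - aw (1 / ((n:ℝ) + 1)) x ^ 3) * nu v z x ^ 2) Filter.atTop (nhds 0) := by
    have : (0:ℝ) = ∫ _ : Ed d, (0:ℝ) := by simp
    rw [this]
    refine tendsto_integral_of_dominated_convergence (fun x => nu v z x ^ 2 / ‖x‖ ^ 3)
      (fun n => (h.i_gap (hδ n)).aestronglyMeasurable) h.i_u3 (fun n => ?_) ?_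
    · filter_upwards [ae_ne_zero h.dpos] with x hx
      obtain ⟨h1, h2⟩ := aw_gap (hδ n) hx
      rw [Real.norm_eq_abs, abs_of_nonneg (mul_nonneg h1 (sq_nonneg _))]
      calc _ ≤ 1 / ‖x‖ ^ 3 * nu v z x ^ 2 := by gcongr
        _ = _ := by ring
    · filter_upwards [ae_ne_zero h.dpos] with x hx
      have hr : 0 < ‖x‖ := norm_pos_iff.2 hx
      have := aw_zero_tendsto hx
      have e : (0:ℝ) = (1 / ‖x‖ / ‖x‖ ^ 2 - (1 / ‖x‖) ^ 3) * nu v z x ^ 2 := by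
        field_simp; ring
      rw [e]
      exact ((this.div_const _).sub (this.pow 3)).mul_const _
  have hR : Filter.Tendsto (fun n : ℕ => ENNReal.ofReal (rhs ε v z p q + kap d *
      ∫ x, (aw (1 / ((n:ℝ) + 1)) x / ‖x‖ ^ 2 - aw (1 / ((n:ℝ) + 1)) x ^ 3) * nu v z x ^ 2))
      Filter.atTop (nhds (ENNReal.ofReal (rhs ε v z p q))) := by
    refine (ENNReal.continuous_ofReal.tendsto _).comp ?_
    simpa using (hG.const_mul (kap d)).const_add (rhs ε v z p q)
  rw [← hR.liminf_eq]
  refine Filter.liminf_le_liminf (.of_forall fun n => ?_)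
  refine (lintegral_mono fun x => ENNReal.ofReal_le_ofReal ?_).trans (h.morawetz (hδ n))
  have := mul_nonneg (ew_nonneg (hδ n) x) (sq_nonneg (gn v z x))
  linarith

lemma hardy_u (h : Sol γ η ε τ V v z p q) :
    ∫ x, nu v z x ^ 2 / ‖x‖ ^ 3 ≤ 1 / (η * kap d) * rhs ε v z p q := by
  have hk := h.kap_pos
  have hη := h.hη
  have hγ := h.hγ
  have hu := h.mu
  have h1 : ∫⁻ x, ENNReal.ofReal (η * kap d * (nu v z x ^ 2 / ‖x‖ ^ 3))
      ≤ ENNReal.ofReal (rhs ε v z p q) := by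
    refine (lintegral_mono fun x => ENNReal.ofReal_le_ofReal ?_).trans h.hardy
    have e : 1 / ‖x‖ / ‖x‖ ^ 2 = 1 / ‖x‖ ^ 3 := by rw [div_div]; ring
    have : 0 ≤ γ / 2 * (V x * nu v z x ^ 2) * (1 / ‖x‖) := by
      have := h.V0 x
      positivity
    rw [e]
    calc _ = η * kap d * nu v z x ^ 2 * (1 / ‖x‖ ^ 3) := by ring
      _ ≤ _ := by linarith
  have h2 := (integrable_of_lintegral_le (by fun_prop) (fun x => by positivity) rhs_nonneg h1).2
  rw [integral_const_mul] at h2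
  rw [div_mul_eq_mul_div, one_mul, le_div_iff₀ (by positivity)]
  linarith

lemma hardy_V (h : Sol γ η ε τ V v z p q) :
    Integrable (fun x => V x * nu v z x ^ 2 / ‖x‖) ∧
    ∫ x, V x * nu v z x ^ 2 / ‖x‖ ≤ 2 / γ * rhs ε v z p q := by
  have hk := h.kap_pos
  have hη := h.hη
  have hγ := h.hγ
  have hu := h.mu
  have hV := h.mV
  have h1 : ∫⁻ x, ENNReal.ofReal (γ / 2 * (V x * nu v z x ^ 2 / ‖x‖))
      ≤ ENNReal.ofReal (rhs ε v z p q) := by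
    refine (lintegral_mono fun x => ENNReal.ofReal_le_ofReal ?_).trans h.hardy
    have : 0 ≤ η * kap d * nu v z x ^ 2 * (1 / ‖x‖ / ‖x‖ ^ 2) := by positivity
    calc _ = γ / 2 * (V x * nu v z x ^ 2) * (1 / ‖x‖) := by ring
      _ ≤ _ := by linarith
  obtain ⟨i2, h2⟩ := integrable_of_lintegral_le (by fun_prop) (fun x => by
    have := h.V0 x
    positivity) rhs_nonneg h1
  refine ⟨(i2.const_mul (2 / γ)).congr (.of_forall fun x => ?_), ?_⟩
  · simp only; field_simp
  rw [integral_const_mul] at h2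
  rw [div_mul_eq_mul_div, le_div_iff₀ (by positivity)]
  linarith

/-- The multiplier estimate at scale `δ`, for the gradient. -/
lemma grad_ew (h : Sol γ η ε τ V v z p q) {δ : ℝ} (hδ : 0 < δ) :
    Integrable (fun x => ew δ x * gn v z x ^ 2) ∧
    ∫ x, ew δ x * gn v z x ^ 2 ≤ (1 + 1 / η) * rhs ε v z p q := by
  have hk := h.kap_pos
  have hη := h.hη
  have hγ := h.hγ
  have he : Measurable (ew δ : Ed d → ℝ) := (contDiff_ew hδ).continuous.measurable
  have hg := h.mg
  have hr := rhs_nonneg (ε := ε) (v := v) (z := z) (p := p) (q := q)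
  refine integrable_of_lintegral_le (by fun_prop)
    (fun x => mul_nonneg (ew_nonneg hδ x) (sq_nonneg _)) (by positivity) ?_
  refine (lintegral_mono fun x => ENNReal.ofReal_le_ofReal ?_).trans
    ((h.morawetz hδ).trans (ENNReal.ofReal_le_ofReal ?_))
  · have := h.V0 x
    have := aw_pos hδ x
    have : 0 ≤ γ / 2 * (V x * nu v z x ^ 2) * aw δ x
        + η * kap d * nu v z x ^ 2 * (aw δ x / ‖x‖ ^ 2) := by positivity
    linarith
  · have h1 : ∫ x, (aw δ x / ‖x‖ ^ 2 - aw δ x ^ 3) * nu v z x ^ 2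
        ≤ ∫ x, nu v z x ^ 2 / ‖x‖ ^ 3 := by
      refine integral_mono_ae (h.i_gap hδ) h.i_u3 ?_
      filter_upwards [ae_ne_zero h.dpos] with x hx
      calc _ ≤ 1 / ‖x‖ ^ 3 * nu v z x ^ 2 := by gcongr; exact (aw_gap hδ hx).2
        _ = _ := by ring
    have h2 := mul_le_mul_of_nonneg_left (h1.trans h.hardy_u) hk.le
    have h3 : kap d * (1 / (η * kap d) * rhs ε v z p q) = 1 / η * rhs ε v z p q := by
      field_simp
    rw [h3] at h2
    linarith

/-- The constant in the localized estimate of `|u|²`. -/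
def cLoc (d : ℕ) (γ η : ℝ) : ℝ := 5 / 2 * (1 + 1 / η) + 3 / 2 * (1 / (η * kap d)) + 2 / γ + 1

/-- Majorant of the error terms in the localized charge and energy estimates. -/
def err (δ : ℝ) (V v z p q : Ed d → ℝ) (x : Ed d) : ℝ :=
  5 / 2 * (ew δ x * gn v z x ^ 2) + 3 / 2 * (nu v z x ^ 2 / ‖x‖ ^ 3)
    + V x * nu v z x ^ 2 / ‖x‖ + nu p q x * nu v z x / ‖x‖

lemma i_err (h : Sol γ η ε τ V v z p q) {δ : ℝ} (hδ : 0 < δ) : Integrable (err δ V v z p q) :=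
  ((((h.grad_ew hδ).1.const_mul _).add (h.i_u3.const_mul _)).add h.hardy_V.1).add h.i_fur

lemma int_err_le (h : Sol γ η ε τ V v z p q) {δ : ℝ} (hδ : 0 < δ) :
    ∫ x, err δ V v z p q x ≤ cLoc d γ η * rhs ε v z p q := by
  unfold err
  rw [integral_add, integral_add, integral_add, integral_const_mul, integral_const_mul]
  · have h1 := (h.grad_ew hδ).2
    have h2 := h.hardy_u
    have h3 := h.hardy_V.2
    have h4 := h.int_fur_le
    unfold cLoc; linarith
  · exact (h.grad_ew hδ).1.const_mul _
  · exact h.i_u3.const_mul _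
  · exact ((h.grad_ew hδ).1.const_mul _).add (h.i_u3.const_mul _)
  · exact h.hardy_V.1
  · exact (((h.grad_ew hδ).1.const_mul _).add (h.i_u3.const_mul _)).add h.hardy_V.1
  · exact h.i_fur

lemma err_bound (h : Sol γ η ε τ V v z p q) {δ : ℝ} (hδ : 0 < δ) {x : Ed d} (hx : x ≠ 0) :
    fw δ x * (nu v z x * (‖x‖ * gn v z x)) + ew δ x * gn v z x ^ 2
      + ew δ x * (V x * nu v z x ^ 2) + ew δ x * (nu p q x * nu v z x) ≤ err δ V v z p q x := by
  have hr : 0 < ‖x‖ := norm_pos_iff.2 hx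
  have he := ew_nonneg hδ x
  have hV := h.V0 x
  have hn := nu_nonneg v z x
  have hf := nu_nonneg p q x
  have hg := gn_nonneg v z x
  have h0 := aw_pos hδ x
  have h1 := aw_le_inv_norm hδ hx
  have h2 : ew δ x ≤ 1 / ‖x‖ := (ew_le_aw hδ x).trans h1
  have h3 := fw_mul_norm_le hδ x
  have t1 : fw δ x * (nu v z x * (‖x‖ * gn v z x)) ≤
      3 / 2 * (ew δ x * gn v z x ^ 2) + 3 / 2 * (nu v z x ^ 2 / ‖x‖ ^ 3) := by
    calc fw δ x * (nu v z x * (‖x‖ * gn v z x))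
        = fw δ x * ‖x‖ * (nu v z x * gn v z x) := by ring
      _ ≤ 3 * (ew δ x * aw δ x) * (nu v z x * gn v z x) := by gcongr
      _ ≤ 3 / 2 * (ew δ x * gn v z x ^ 2) + 3 / 2 * (ew δ x * aw δ x ^ 2 * nu v z x ^ 2) := by
        nlinarith [mul_nonneg he (sq_nonneg (gn v z x - aw δ x * nu v z x))]
      _ ≤ 3 / 2 * (ew δ x * gn v z x ^ 2)
          + 3 / 2 * (1 / ‖x‖ * (1 / ‖x‖) ^ 2 * nu v z x ^ 2) := by gcongr
      _ = _ := by rw [div_pow, one_pow]; field_simp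
  have t2 : ew δ x * (V x * nu v z x ^ 2) ≤ V x * nu v z x ^ 2 / ‖x‖ := by
    calc _ ≤ 1 / ‖x‖ * (V x * nu v z x ^ 2) := by gcongr
      _ = _ := by ring
  have t3 : ew δ x * (nu p q x * nu v z x) ≤ nu p q x * nu v z x / ‖x‖ := by
    calc _ ≤ 1 / ‖x‖ * (nu p q x * nu v z x) := by gcongr
      _ = _ := by ring
  unfold err
  linarith

lemma abs_ew_le {δ : ℝ} (hδ : 0 < δ) (x : Ed d) : |ew δ x| ≤ 1 / δ := by
  rw [abs_of_nonneg (ew_nonneg hδ x)]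
  exact (ew_le_aw hδ x).trans (aw_le_inv hδ x)

/-- Localized energy estimate. -/
lemma tau_ew (h : Sol γ η ε τ V v z p q) {δ : ℝ} (hδ : 0 < δ) :
    ∫⁻ x, ENNReal.ofReal (max 0 τ * (ew δ x * nu v z x ^ 2))
      ≤ ENNReal.ofReal (cLoc d γ η * rhs ε v z p q) := by
  rcases le_or_gt τ 0 with ht | ht
  · simp [max_eq_left ht]
  rw [max_eq_right ht.le]
  have he : Measurable (ew δ : Ed d → ℝ) := (contDiff_ew hδ).continuous.measurable
  have hu := h.mu
  refine (h.re_gen (b := fun x => -ew δ x) (c := fun x => -fw δ x) (B := 1 / δ)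
    (contDiff_ew hδ).neg (fun i x => ?_) (fun x => by rw [abs_neg]; exact abs_ew_le hδ x)
    (h.i_err hδ) (by fun_prop) (fun x => ?_) fun x hx => ?_).trans
    (ENNReal.ofReal_le_ofReal (h.int_err_le hδ))
  · have := dd_ew hδ i x
    unfold dd at this ⊢
    rw [fderiv_fun_neg, neg_apply, this]; ring
  · have := ew_nonneg hδ x
    positivity
  · have h0 := h.err_bound hδ hx
    have h1 := mul_le_mul_of_nonneg_left (abs_le.1 (re_pair_le p q v z x)).1 (ew_nonneg hδ x)
    have h2 := mul_le_mul_of_nonneg_left (abs_le.1 (re_euler_le v z x)).1 (fw_nonneg hδ x)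
    linarith

/-- Localized charge estimate. -/
lemma eps_ew (h : Sol γ η ε τ V v z p q) {δ : ℝ} (hδ : 0 < δ) :
    ∫⁻ x, ENNReal.ofReal (|ε| * (ew δ x * nu v z x ^ 2))
      ≤ ENNReal.ofReal (cLoc d γ η * rhs ε v z p q) := by
  have he : Measurable (ew δ : Ed d → ℝ) := (contDiff_ew hδ).continuous.measurable
  have ha : Measurable (aw δ : Ed d → ℝ) := (contDiff_aw hδ (n := 0)).continuous.measurable
  have hfw : Measurable (fw δ : Ed d → ℝ) := by unfold fw; fun_prop
  have hu := h.mu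
  have hg := h.mg
  have hp := h.mp
  have hle : ∀ x, x ≠ 0 → fw δ x * (nu v z x * (‖x‖ * gn v z x))
      + ew δ x * (nu p q x * nu v z x) ≤ err δ V v z p q x := fun x hx => by
    have h0 := h.err_bound hδ hx
    have := mul_nonneg (ew_nonneg hδ x) (sq_nonneg (gn v z x))
    have := mul_nonneg (ew_nonneg hδ x) (mul_nonneg (h.V0 x) (sq_nonneg (nu v z x)))
    linarith
  have hi : Integrable (fun x => fw δ x * (nu v z x * (‖x‖ * gn v z x))
      + ew δ x * (nu p q x * nu v z x)) := by
    refine (h.i_err hδ).mono' (by fun_prop) ?_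
    filter_upwards [ae_ne_zero h.dpos] with x hx
    have := fw_nonneg hδ x
    have := ew_nonneg hδ x
    have := nu_nonneg v z x
    have := nu_nonneg p q x
    have := gn_nonneg v z x
    rw [Real.norm_eq_abs, abs_of_nonneg (by positivity)]
    exact hle x hx
  refine (h.charge_gen (contDiff_ew hδ) (dd_ew hδ) (abs_ew_le hδ) (ew_nonneg hδ) (fw_nonneg hδ)
    hi).trans (ENNReal.ofReal_le_ofReal (le_trans ?_ (h.int_err_le hδ)))
  refine integral_mono_ae hi (h.i_err hδ) ?_
  filter_upwards [ae_ne_zero h.dpos] with x hx using hle x hx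

end Sol
/-! ### Duality and the closing of the estimate -/

lemma exists_shell {d : ℕ} {x : Ed d} (hx : x ≠ 0) : ∃ j : ℤ, x ∈ shell d j :=
  exists_mem_Ioc_zpow (norm_pos_iff.2 hx) one_lt_two

lemma lintegral_ball_le_nX2 {d : ℕ} (g : Ed d → ℝ≥0∞) {R : ℝ} (hR : 0 < R) :
    ∫⁻ x in ball (0 : Ed d) R, g x ≤ ENNReal.ofReal R * nX2 g := by
  have h : (ENNReal.ofReal R)⁻¹ * ∫⁻ x in ball (0 : Ed d) R, g x ≤ nX2 g :=
    le_iSup₂ (f := fun (R : ℝ) (_ : 0 < R) =>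
      (ENNReal.ofReal R)⁻¹ * ∫⁻ x in ball (0 : Ed d) R, g x) R hR
  have h0 : ENNReal.ofReal R ≠ 0 := by simpa using hR
  rwa [ENNReal.inv_mul_le_iff h0 ENNReal.ofReal_ne_top] at h

lemma nX2_const_mul {d : ℕ} (g : Ed d → ℝ≥0∞) {c : ℝ≥0∞} (hc : c ≠ ⊤) :
    nX2 (fun x => c * g x) = c * nX2 g := by
  unfold nX2
  simp only [ENNReal.mul_iSup]
  refine iSup_congr fun R => iSup_congr fun _ => ?_
  rw [lintegral_const_mul' _ _ hc, mul_left_comm]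

/-- The duality of the norms `X` and `X*`. -/
lemma duality {d : ℕ} (hd : 0 < d) {h₁ h₂ : Ed d → ℝ≥0∞} (m₁ : Measurable h₁)
    (m₂ : Measurable h₂) :
    ∫⁻ x, h₁ x * h₂ x ≤
      nXstar (fun x => h₁ x ^ 2) * (2 * nX2 (fun x => h₂ x ^ 2)) ^ (1 / 2 : ℝ) := by
  have e : ∫⁻ x, h₁ x * h₂ x ≤ ∫⁻ x in ⋃ j, shell d j, h₁ x * h₂ x := by
    rw [← setLIntegral_univ]
    refine lintegral_mono_set' ?_
    filter_upwards [ae_ne_zero hd] with x hx _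
    exact mem_iUnion.2 (exists_shell hx)
  refine e.trans ((lintegral_iUnion_le _ _).trans ?_)
  unfold nXstar
  rw [← ENNReal.tsum_mul_right]
  refine ENNReal.tsum_le_tsum fun j => ?_
  have hol := ENNReal.lintegral_mul_le_Lp_mul_Lq (volume.restrict (shell d j))
    (Real.HolderConjugate.two_two) m₁.aemeasurable m₂.aemeasurable
  refine hol.trans ?_
  simp only [ENNReal.rpow_two]
  have hR : (0:ℝ) < 2 ^ (j + 1) * 2 := by positivity
  have hs : shell d j ⊆ ball (0 : Ed d) (2 ^ (j + 1) * 2) := fun x hx => by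
    have h2 : (0:ℝ) < 2 ^ (j + 1) := by positivity
    have := hx.2
    simp only [mem_ball, dist_zero_right]
    linarith
  have key : ∫⁻ x in shell d j, h₂ x ^ 2
      ≤ ENNReal.ofReal (2 ^ (j + 1)) * (2 * nX2 (fun x => h₂ x ^ 2)) := by
    calc ∫⁻ x in shell d j, h₂ x ^ 2 ≤ ∫⁻ x in ball (0 : Ed d) (2 ^ (j + 1) * 2), h₂ x ^ 2 :=
          lintegral_mono_set hs
      _ ≤ ENNReal.ofReal (2 ^ (j + 1) * 2) * nX2 (fun x => h₂ x ^ 2) :=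
          lintegral_ball_le_nX2 _ hR
      _ = _ := by
        rw [ENNReal.ofReal_mul (by positivity), mul_assoc]; simp
  have hh : (0:ℝ) ≤ 1 / 2 := by norm_num
  refine (mul_le_mul_right (ENNReal.rpow_le_rpow key hh) _).trans (le_of_eq ?_)
  rw [ENNReal.mul_rpow_of_nonneg (ENNReal.ofReal _) _ hh,
    ENNReal.mul_rpow_of_nonneg (ENNReal.ofReal _) _ hh]
  ring

/-- Duality for real functions and finite norms. -/
lemma duality_real {d : ℕ} (hd : 0 < d) {f w : Ed d → ℝ} (mf : Measurable f) (mw : Measurable w)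
    (f0 : ∀ x, 0 ≤ f x) (w0 : ∀ x, 0 ≤ w x) (hi : Integrable (fun x => f x * w x)) {F A : ℝ}
    (hF0 : 0 ≤ F) (hF : nXstar (fun x => ENNReal.ofReal (f x ^ 2)) = ENNReal.ofReal F)
    (hA0 : 0 ≤ A) (hA : nX2 (fun x => ENNReal.ofReal (w x ^ 2)) ≤ ENNReal.ofReal A) :
    ∫ x, f x * w x ≤ F * √(2 * A) := by
  have h := duality hd mf.ennreal_ofReal mw.ennreal_ofReal
  simp only [← ENNReal.ofReal_pow (f0 _), ← ENNReal.ofReal_pow (w0 _)] at h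
  simp only [← ENNReal.ofReal_mul (f0 _)] at h
  rw [← ofReal_integral_eq_lintegral_ofReal hi (.of_forall fun x => mul_nonneg (f0 x) (w0 x)),
    hF] at h
  have h2 : ENNReal.ofReal (∫ x, f x * w x) ≤ ENNReal.ofReal (F * √(2 * A)) := by
    refine h.trans ?_
    rw [ENNReal.ofReal_mul hF0, Real.sqrt_eq_rpow,
      ← ENNReal.ofReal_rpow_of_nonneg (by positivity) (by norm_num),
      ENNReal.ofReal_mul (by norm_num : (0:ℝ) ≤ 2)]
    gcongr
    simp
  rwa [ENNReal.ofReal_le_ofReal_iff (by positivity)] at h2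

namespace Sol

variable {d : ℕ} {γ η ε τ : ℝ} {V v z p q : Ed d → ℝ}

lemma cLoc_pos (h : Sol γ η ε τ V v z p q) : 0 < cLoc d γ η := by
  have := h.kap_pos
  have := h.hη
  have := h.hγ
  unfold cLoc; positivity

lemma nX2_grad (h : Sol γ η ε τ V v z p q) :
    nX2 (fun x => ENNReal.ofReal (gn v z x ^ 2))
      ≤ ENNReal.ofReal (3 * ((1 + 1 / η) * rhs ε v z p q)) := by
  rw [ENNReal.ofReal_mul (by norm_num), show ENNReal.ofReal 3 = 3 by simp]
  refine nX2_le_of_ew (fun x => sq_nonneg _) fun R hR => ?_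
  obtain ⟨h1, h2⟩ := h.grad_ew hR
  rw [← ofReal_integral_eq_lintegral_ofReal h1
    (.of_forall fun x => mul_nonneg (ew_nonneg hR x) (sq_nonneg _))]
  exact ENNReal.ofReal_le_ofReal h2

lemma nX2_tau (h : Sol γ η ε τ V v z p q) :
    nX2 (fun x => ENNReal.ofReal (max 0 τ * nu v z x ^ 2))
      ≤ ENNReal.ofReal (3 * (cLoc d γ η * rhs ε v z p q)) := by
  rw [ENNReal.ofReal_mul (by norm_num), show ENNReal.ofReal 3 = 3 by simp]
  refine nX2_le_of_ew (fun x => by positivity) fun R hR => ?_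
  simp only [mul_left_comm (ew R _)]
  exact h.tau_ew hR

lemma nX2_lam (h : Sol γ η ε τ V v z p q) :
    nX2 (fun x => ENNReal.ofReal ((max 0 τ + |ε|) * nu v z x ^ 2))
      ≤ ENNReal.ofReal (6 * (cLoc d γ η * rhs ε v z p q)) := by
  have hr := rhs_nonneg (ε := ε) (v := v) (z := z) (p := p) (q := q)
  have hc := h.cLoc_pos
  have e : ENNReal.ofReal (6 * (cLoc d γ η * rhs ε v z p q))
      = 3 * (ENNReal.ofReal (cLoc d γ η * rhs ε v z p q)
        + ENNReal.ofReal (cLoc d γ η * rhs ε v z p q)) := by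
    rw [← ENNReal.ofReal_add (by positivity) (by positivity),
      show (3:ℝ≥0∞) = ENNReal.ofReal 3 by simp, ← ENNReal.ofReal_mul (by norm_num)]
    congr 1; ring
  rw [e]
  refine nX2_le_of_ew (fun x => by positivity) fun R hR => ?_
  refine le_trans (le_of_eq ?_) (add_le_add (h.tau_ew hR) (h.eps_ew hR))
  have he : Measurable (ew R : Ed d → ℝ) := (contDiff_ew hR).continuous.measurable
  have hu := h.mu
  rw [← lintegral_add_left (by fun_prop)]
  refine lintegral_congr fun x => ?_
  have := ew_nonneg hR x
  rw [← ENNReal.ofReal_add (by positivity) (by positivity)]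
  congr 1; ring

/-- On the ball of radius `R`, `R⁻ᵏ` is dominated by `|x|⁻ᵏ`. -/
lemma ball_weight (h : Sol γ η ε τ V v z p q) (k : ℕ) {R : ℝ} (hR : 0 < R) {g : Ed d → ℝ}
    (g0 : ∀ x, 0 ≤ g x) :
    (ENNReal.ofReal (R ^ k))⁻¹ * ∫⁻ x in ball (0 : Ed d) R, ENNReal.ofReal (g x)
      ≤ ∫⁻ x, ENNReal.ofReal (g x / ‖x‖ ^ k) := by
  rw [← ENNReal.ofReal_inv_of_pos (by positivity),
    ← lintegral_const_mul' _ _ ENNReal.ofReal_ne_top]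
  refine le_trans ?_ (setLIntegral_le_lintegral (ball (0 : Ed d) R) _)
  refine setLIntegral_mono_ae' measurableSet_ball ?_
  filter_upwards [ae_ne_zero h.dpos] with x hx hxR
  have hr : 0 < ‖x‖ := norm_pos_iff.2 hx
  have hr2 : ‖x‖ ≤ R := by
    have : ‖x‖ < R := by simpa using hxR
    exact this.le
  rw [← ENNReal.ofReal_mul (by positivity), inv_mul_eq_div]
  refine ENNReal.ofReal_le_ofReal (div_le_div_of_nonneg_left (g0 x) (by positivity) ?_)
  gcongr

lemma lint_u3 (h : Sol γ η ε τ V v z p q) :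
    ∫⁻ x, ENNReal.ofReal (nu v z x ^ 2 / ‖x‖ ^ 3)
      ≤ ENNReal.ofReal (1 / (η * kap d) * rhs ε v z p q) := by
  rw [← ofReal_integral_eq_lintegral_ofReal h.i_u3 (.of_forall fun x => by positivity)]
  exact ENNReal.ofReal_le_ofReal h.hardy_u

lemma nX2_ur (h : Sol γ η ε τ V v z p q) :
    nX2 (fun x => ENNReal.ofReal ((nu v z x / ‖x‖) ^ 2))
      ≤ ENNReal.ofReal (1 / (η * kap d) * rhs ε v z p q) := by
  refine iSup₂_le fun R hR => le_trans ?_ h.lint_u3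
  have := h.ball_weight 1 hR (g := fun x => (nu v z x / ‖x‖) ^ 2) (fun x => sq_nonneg _)
  rw [pow_one] at this
  refine this.trans (lintegral_mono fun x => ENNReal.ofReal_le_ofReal (le_of_eq ?_))
  rw [div_pow, div_div, pow_one, ← pow_succ]

/-- Interpolation of the charge and energy estimates. -/
lemma eps_term (h : Sol γ η ε τ V v z p q) :
    |ε| * ∫ x, nu v z x * gn v z x ≤ √(max 0 τ + |ε|) * ∫ x, nu p q x * nu v z x := by
  have he : 0 < |ε| := abs_pos.2 h.hε
  have ht : 0 ≤ max 0 τ := le_max_left _ _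
  have hl : 0 < √(max 0 τ + |ε|) := Real.sqrt_pos.2 (by positivity)
  have hl2 : √(max 0 τ + |ε|) ^ 2 = max 0 τ + |ε| := Real.sq_sqrt (by positivity)
  set l := √(max 0 τ + |ε|)
  have h1 := h.int_u_le
  have h2 := h.int_g_le
  have h3 : 2 * l * ∫ x, nu v z x * gn v z x
      ≤ l ^ 2 * (∫ x, nu v z x ^ 2) + ∫ x, gn v z x ^ 2 := by
    rw [← integral_const_mul, ← integral_const_mul, ← integral_add (h.iu.const_mul _) h.ig]
    refine integral_mono (h.i_ug.const_mul _) ((h.iu.const_mul _).add h.ig) fun x => ?_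
    simp only
    nlinarith [sq_nonneg (l * nu v z x - gn v z x)]
  generalize (∫ x, nu v z x * gn v z x) = J at *
  generalize (∫ x, nu v z x ^ 2) = U at *
  generalize (∫ x, gn v z x ^ 2) = G at *
  generalize (∫ x, nu p q x * nu v z x) = I at *
  have h4 : |ε| * G ≤ l ^ 2 * I := by
    rw [hl2]
    nlinarith [mul_le_mul_of_nonneg_left h2 he.le, mul_le_mul_of_nonneg_left h1 ht]
  have h5 : l ^ 2 * (|ε| * U) ≤ l ^ 2 * I := by gcongr
  have h6 : l * (|ε| * J) ≤ l * (l * I) := by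
    nlinarith [mul_le_mul_of_nonneg_left h3 he.le]
  exact le_of_mul_le_mul_left h6 hl

/-- The constant in `rhs ≤ K² ‖f‖²`. -/
def cK (d : ℕ) (γ η : ℝ) : ℝ :=
  √(6 * (1 + 1 / η)) + d / 2 * √(2 * (1 / (η * kap d))) + √(12 * cLoc d γ η)

lemma rhs_le (h : Sol γ η ε τ V v z p q) {F : ℝ} (hF0 : 0 ≤ F)
    (hF : nXstar (fun x => ENNReal.ofReal (nu p q x ^ 2)) = ENNReal.ofReal F) :
    rhs ε v z p q ≤ cK d γ η ^ 2 * F ^ 2 := by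
  have hr := rhs_nonneg (ε := ε) (v := v) (z := z) (p := p) (q := q)
  have hc := h.cLoc_pos
  have hk := h.kap_pos
  have hη := h.hη
  have ht : 0 ≤ max 0 τ := le_max_left _ _
  have hl2 : √(max 0 τ + |ε|) ^ 2 = max 0 τ + |ε| := Real.sq_sqrt (by positivity)
  have hu := h.mu
  have b1 : ∫ x, nu p q x * gn v z x ≤ F * (√(6 * (1 + 1 / η)) * √(rhs ε v z p q)) := by
    have := duality_real h.dpos h.mp h.mg (nu_nonneg _ _) (gn_nonneg _ _) h.i_fg hF0 hF
      (by positivity) h.nX2_grad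
    rwa [show 2 * (3 * ((1 + 1 / η) * rhs ε v z p q)) = 6 * (1 + 1 / η) * rhs ε v z p q by ring,
      Real.sqrt_mul (by positivity)] at this
  have b2 : ∫ x, nu p q x * nu v z x / ‖x‖
      ≤ F * (√(2 * (1 / (η * kap d))) * √(rhs ε v z p q)) := by
    have := duality_real h.dpos h.mp (w := fun x => nu v z x / ‖x‖) (by fun_prop) (nu_nonneg _ _)
      (fun x => div_nonneg (nu_nonneg _ _ _) (norm_nonneg _))
      (h.i_fur.congr (.of_forall fun x => mul_div_assoc _ _ _)) hF0 hF
      (by positivity) h.nX2_ur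
    rw [← mul_assoc, Real.sqrt_mul (by positivity)] at this
    simpa only [mul_div_assoc] using this
  have b3 : √(max 0 τ + |ε|) * ∫ x, nu p q x * nu v z x
      ≤ F * (√(12 * cLoc d γ η) * √(rhs ε v z p q)) := by
    have := duality_real h.dpos h.mp (w := fun x => √(max 0 τ + |ε|) * nu v z x) (by fun_prop)
      (nu_nonneg _ _)
      (fun x => mul_nonneg (Real.sqrt_nonneg _) (nu_nonneg _ _ _))
      ((h.i_fu.const_mul (√(max 0 τ + |ε|))).congr (.of_forall fun x => mul_left_comm _ _ _))
      hF0 hF (A := 6 * (cLoc d γ η * rhs ε v z p q)) (by positivity)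
      (by simp only [mul_pow, hl2]; exact h.nX2_lam)
    simp only [mul_left_comm (nu p q _)] at this
    rw [integral_const_mul] at this
    rwa [show 2 * (6 * (cLoc d γ η * rhs ε v z p q)) = 12 * cLoc d γ η * rhs ε v z p q by ring,
      Real.sqrt_mul (by positivity)] at this
  have b4 := h.eps_term
  have hG : rhs ε v z p q ≤ cK d γ η * F * √(rhs ε v z p q) := by
    have b2' := mul_le_mul_of_nonneg_left b2 (by positivity : (0:ℝ) ≤ d / 2)
    conv_lhs => unfold rhs
    unfold cK
    linarith
  have hs : √(rhs ε v z p q) ^ 2 = rhs ε v z p q := Real.sq_sqrt hr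
  have hs0 := Real.sqrt_nonneg (rhs ε v z p q)
  rw [← hs] at hG ⊢
  rw [Real.sqrt_sq hs0] at hG
  rw [← mul_pow]
  generalize √(rhs ε v z p q) = s at *
  rcases hs0.eq_or_lt with h0 | h0
  · rw [← h0, zero_pow two_ne_zero]; positivity
  · have : s ≤ cK d γ η * F := by
      rw [sq] at hG; exact le_of_mul_le_mul_right hG h0
    gcongr

/-- The constant relating the left-hand side of the theorem to `rhs`. -/
def cL (d : ℕ) (γ η : ℝ) : ℝ :=
  3 * (1 + 1 / η) + 3 * cLoc d γ η + (d - 3) * (1 / (η * kap d)) + 2 / γ + 1 / (η * kap d)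

/-- The theorem in real form. -/
lemma main (h : Sol γ η ε τ V v z p q)
    (hF : nXstar (fun x => ENNReal.ofReal (nu p q x ^ 2)) ≠ ⊤) :
    nX2 (fun x => ENNReal.ofReal (gn v z x ^ 2))
        + ENNReal.ofReal (max 0 τ) * nX2 (fun x => ENNReal.ofReal (nu v z x ^ 2))
        + ENNReal.ofReal ((d:ℝ) - 3) *
          (∫⁻ x, ENNReal.ofReal (nu v z x ^ 2) / ENNReal.ofReal (‖x‖ ^ 3))
        + (∫⁻ x, ENNReal.ofReal (V x / ‖x‖) * ENNReal.ofReal (nu v z x ^ 2))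
        + (⨆ (R : ℝ) (_ : 0 < R), (ENNReal.ofReal (R ^ 3))⁻¹ *
            ∫⁻ x in ball (0 : Ed d) R, ENNReal.ofReal (nu v z x ^ 2))
      ≤ ENNReal.ofReal (cL d γ η * cK d γ η ^ 2)
        * nXstar (fun x => ENNReal.ofReal (nu p q x ^ 2)) ^ 2 := by
  have hr := rhs_nonneg (ε := ε) (v := v) (z := z) (p := p) (q := q)
  have hc := h.cLoc_pos
  have hk := h.kap_pos
  have hη := h.hη
  have hγ := h.hγ
  have hd3 : 0 ≤ (d:ℝ) - 3 := by linarith [h.d4]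
  obtain ⟨F, hF0, hFe⟩ : ∃ F : ℝ, 0 ≤ F ∧
      nXstar (fun x => ENNReal.ofReal (nu p q x ^ 2)) = ENNReal.ofReal F :=
    ⟨_, ENNReal.toReal_nonneg, (ENNReal.ofReal_toReal hF).symm⟩
  have hG := h.rhs_le hF0 hFe
  rw [hFe]
  have t1 := h.nX2_grad
  have t2 : ENNReal.ofReal (max 0 τ) * nX2 (fun x => ENNReal.ofReal (nu v z x ^ 2))
      ≤ ENNReal.ofReal (3 * (cLoc d γ η * rhs ε v z p q)) := by
    rw [← nX2_const_mul _ ENNReal.ofReal_ne_top]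
    simp only [← ENNReal.ofReal_mul (le_max_left 0 τ)]
    exact h.nX2_tau
  have t3 : ENNReal.ofReal ((d:ℝ) - 3) *
      (∫⁻ x, ENNReal.ofReal (nu v z x ^ 2) / ENNReal.ofReal (‖x‖ ^ 3))
      ≤ ENNReal.ofReal (((d:ℝ) - 3) * (1 / (η * kap d) * rhs ε v z p q)) := by
    rw [ENNReal.ofReal_mul hd3]
    gcongr
    refine le_trans (le_of_eq (lintegral_congr_ae ?_)) h.lint_u3
    filter_upwards [ae_ne_zero h.dpos] with x hx
    have : 0 < ‖x‖ := norm_pos_iff.2 hx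
    rw [ENNReal.ofReal_div_of_pos (by positivity)]
  have t4 : ∫⁻ x, ENNReal.ofReal (V x / ‖x‖) * ENNReal.ofReal (nu v z x ^ 2)
      ≤ ENNReal.ofReal (2 / γ * rhs ε v z p q) := by
    refine le_trans (le_of_eq ?_) (ENNReal.ofReal_le_ofReal h.hardy_V.2)
    rw [ofReal_integral_eq_lintegral_ofReal h.hardy_V.1 (.of_forall fun x =>
      div_nonneg (mul_nonneg (h.V0 x) (sq_nonneg _)) (norm_nonneg _))]
    refine lintegral_congr fun x => ?_
    rw [← ENNReal.ofReal_mul (div_nonneg (h.V0 x) (norm_nonneg _))]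
    congr 1; ring
  have t5 : (⨆ (R : ℝ) (_ : 0 < R), (ENNReal.ofReal (R ^ 3))⁻¹ *
      ∫⁻ x in ball (0 : Ed d) R, ENNReal.ofReal (nu v z x ^ 2))
      ≤ ENNReal.ofReal (1 / (η * kap d) * rhs ε v z p q) :=
    iSup₂_le fun R hR => (h.ball_weight 3 hR fun x => sq_nonneg _).trans h.lint_u3
  refine (add_le_add (add_le_add (add_le_add (add_le_add t1 t2) t3) t4) t5).trans ?_
  rw [← ENNReal.ofReal_add (by positivity) (by positivity),
    ← ENNReal.ofReal_add (by positivity) (by positivity),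
    ← ENNReal.ofReal_add (by positivity) (by positivity),
    ← ENNReal.ofReal_add (by positivity) (by positivity),
    ← ENNReal.ofReal_pow hF0, ← ENNReal.ofReal_mul' (by positivity)]
  refine ENNReal.ofReal_le_ofReal ?_
  have hcL : 0 ≤ cL d γ η := by unfold cL; positivity
  calc _ = cL d γ η * rhs ε v z p q := by unfold cL; ring
    _ ≤ cL d γ η * (cK d γ η ^ 2 * F ^ 2) := by gcongr
    _ = _ := by ring

end Sol
/-! ### Reduction to real functions -/

lemma dd_re {d : ℕ} {u : Ed d → ℂ} {x : Ed d} (hu : DifferentiableAt ℝ u x) (i : Fin d) :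
    dd (fun y => (u y).re) i x = (pd u i x).re := by
  have h : HasFDerivAt (fun y => (u y).re) (Complex.reCLM.comp (fderiv ℝ u x)) x :=
    Complex.reCLM.hasFDerivAt.comp x hu.hasFDerivAt
  rw [dd, h.fderiv]; rfl

lemma dd_im {d : ℕ} {u : Ed d → ℂ} {x : Ed d} (hu : DifferentiableAt ℝ u x) (i : Fin d) :
    dd (fun y => (u y).im) i x = (pd u i x).im := by
  have h : HasFDerivAt (fun y => (u y).im) (Complex.imCLM.comp (fderiv ℝ u x)) x :=
    Complex.imCLM.hasFDerivAt.comp x hu.hasFDerivAt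
  rw [dd, h.fderiv]; rfl

lemma differentiable_pd {d : ℕ} {u : Ed d → ℂ} (hu : ContDiff ℝ 2 u) (i : Fin d) :
    Differentiable ℝ (pd u i) := by
  have h : ContDiff ℝ 1 (pd u i) := (hu.fderiv_right (m := 1) (by norm_num)).clm_apply contDiff_const
  exact h.differentiable (by norm_num)

lemma rlap_re {d : ℕ} {u : Ed d → ℂ} (hu : ContDiff ℝ 2 u) (x : Ed d) :
    rlap (fun y => (u y).re) x = (lap u x).re := by
  have h1 : ∀ i, dd (fun y => (u y).re) i = fun x => (pd u i x).re := fun i => funext fun x =>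
    dd_re (hu.differentiable (by norm_num) x) i
  simp only [rlap, lap, h1, Complex.re_sum]
  exact Finset.sum_congr rfl fun i _ => dd_re (differentiable_pd hu i x) i

lemma rlap_im {d : ℕ} {u : Ed d → ℂ} (hu : ContDiff ℝ 2 u) (x : Ed d) :
    rlap (fun y => (u y).im) x = (lap u x).im := by
  have h1 : ∀ i, dd (fun y => (u y).im) i = fun x => (pd u i x).im := fun i => funext fun x =>
    dd_im (hu.differentiable (by norm_num) x) i
  simp only [rlap, lap, h1, Complex.im_sum]
  exact Finset.sum_congr rfl fun i _ => dd_im (differentiable_pd hu i x) i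

lemma nnnorm_sq_eq (c : ℂ) : (‖c‖₊ : ℝ≥0∞) ^ 2 = ENNReal.ofReal (c.re ^ 2 + c.im ^ 2) := by
  have h : c.re ^ 2 + c.im ^ 2 = ‖c‖ ^ 2 := by
    rw [Complex.sq_norm, Complex.normSq_apply]; ring
  rw [h, ENNReal.ofReal_pow (norm_nonneg _), ofReal_norm, enorm_eq_nnnorm]

lemma usq_eq {d : ℕ} (u : Ed d → ℂ) :
    usq u = fun x => ENNReal.ofReal (nu (fun y => (u y).re) (fun y => (u y).im) x ^ 2) := by
  funext x
  rw [usq, nu_sq, nnnorm_sq_eq]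

lemma gradSq_eq {d : ℕ} {u : Ed d → ℂ} (hu : ContDiff ℝ 2 u) :
    gradSq u = fun x => ENNReal.ofReal (gn (fun y => (u y).re) (fun y => (u y).im) x ^ 2) := by
  funext x
  have hx := hu.differentiable (by norm_num) x
  rw [gradSq, gn_sq, gs, ENNReal.ofReal_sum_of_nonneg fun i _ => by positivity]
  refine Finset.sum_congr rfl fun i _ => ?_
  rw [nnnorm_sq_eq, dd_re hx, dd_im hx]

lemma sol_of_complex {d : ℕ} (hd : 3 < d) {γ η : ℝ} (hγ : 0 < γ) (hη : 0 < η) {V : Ed d → ℝ}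
    (V0 : ∀ x, 0 ≤ V x) (VC : ContDiffOn ℝ 1 V {0}ᶜ)
    (rep : ∀ x : Ed d, x ≠ 0 →
      γ * V x + ‖x‖ * radialDeriv V x ≤ (1 - η) * ((d:ℝ) - 1) * ((d:ℝ) - 3) / (2 * ‖x‖ ^ 2))
    {ε τ : ℝ} (hε : ε ≠ 0) {σ : ℝ} (hσ : σ = 1 ∨ σ = -1) {u f : Ed d → ℂ} (hu : ContDiff ℝ 2 u)
    (iu : ∫⁻ x, usq u x < ⊤) (ig : ∫⁻ x, gradSq u x < ⊤) (ife : ∫⁻ x, usq f x < ⊤)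
    (heq : ∀ x, -lap u x + (V x : ℂ) * u x + (σ : ℂ) * ((ε : ℂ) * Complex.I) * u x
        - (τ : ℂ) * u x = f x) :
    Sol γ η (σ * ε) τ V (fun x => (u x).re) (fun x => (u x).im) (fun x => (f x).re)
      (fun x => (f x).im) := by
  have hv : ContDiff ℝ 2 (fun x => (u x).re) := Complex.reCLM.contDiff.comp hu
  have hz : ContDiff ℝ 2 (fun x => (u x).im) := Complex.imCLM.contDiff.comp hu
  have eqp : ∀ x, -rlap (fun x => (u x).re) x + (V x - τ) * (u x).re - σ * ε * (u x).im
      = (f x).re := fun x => by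
    rw [rlap_re hu, ← heq x]; simp; ring
  have eqq : ∀ x, -rlap (fun x => (u x).im) x + (V x - τ) * (u x).im + σ * ε * (u x).re
      = (f x).im := fun x => by
    rw [rlap_im hu, ← heq x]; simp; ring
  have mV : Measurable V := measurable_of_continuousOn_compl_singleton 0 VC.continuousOn
  have mf : Measurable (nu (fun x => (f x).re) (fun x => (f x).im)) := by
    have a1 := (continuous_rlap hv).measurable
    have a2 := (continuous_rlap hz).measurable
    have a3 := hu.continuous.measurable
    have m1 : Measurable (fun x => (f x).re) := by simp only [← eqp]; fun_prop
    have m2 : Measurable (fun x => (f x).im) := by simp only [← eqq]; fun_prop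
    unfold nu; fun_prop
  rw [usq_eq] at iu ife
  rw [gradSq_eq hu] at ig
  have key : ∀ {F : Ed d → ℝ}, Measurable F → ∫⁻ x, ENNReal.ofReal (F x ^ 2) < ⊤ →
      Integrable (fun x => F x ^ 2) := fun {F} hm hF =>
    ⟨(hm.pow_const 2).aestronglyMeasurable, by
      rwa [hasFiniteIntegral_iff_ofReal (.of_forall fun x => sq_nonneg _)]⟩
  refine ⟨hd, hγ, hη, ?_, V0, VC, fun x hx => ?_, hv, hz, eqp, eqq,
    key (continuous_nu hv.continuous hz.continuous).measurable iu,
    key (continuous_gn hv hz).measurable ig, key mf ife⟩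
  · rcases hσ with rfl | rfl <;> simpa using hε
  · have h := rep x hx
    have hr : ‖x‖ ≠ 0 := norm_ne_zero_iff.2 hx
    rwa [radialDeriv, mul_div_cancel₀ _ hr, fderiv_self_eq_euler] at h

/-- a priori estimate for the resolvent equation with a repulsive
potential in dimension d > 3. -/
theorem stmt_0 (d : ℕ) (hd : 3 < d) (γ η : ℝ) (hγ : 0 < γ) (hη : 0 < η) :
    ∃ C : ℝ, 0 < C ∧
      ∀ (V : Ed d → ℝ), (∀ x, 0 ≤ V x) → ContDiffOn ℝ 1 V ({(0 : Ed d)}ᶜ) →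
      (∀ x : Ed d, x ≠ 0 →
        γ * V x + ‖x‖ * radialDeriv V x ≤ (1 - η) * ((d:ℝ) - 1) * ((d:ℝ) - 3) / (2 * ‖x‖^2)) →
      ∀ (ε τ : ℝ), ε ≠ 0 →
      ∀ (σ : ℝ), σ = 1 ∨ σ = -1 →
      ∀ (u f : Ed d → ℂ), ContDiff ℝ 2 u →
      (∫⁻ x, usq u x) < ⊤ → (∫⁻ x, gradSq u x) < ⊤ → (∫⁻ x, usq f x) < ⊤ →
      (∀ x, -lap u x + (V x : ℂ) * u x + (σ : ℂ) * ((ε : ℂ) * Complex.I) * u x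
        - (τ : ℂ) * u x = f x) →
      nX2 (gradSq u)
        + ENNReal.ofReal (max 0 τ) * nX2 (usq u)
        + ENNReal.ofReal ((d:ℝ) - 3) * (∫⁻ x, usq u x / ENNReal.ofReal (‖x‖^3))
        + (∫⁻ x, ENNReal.ofReal (V x / ‖x‖) * usq u x)
        + (⨆ (R : ℝ) (_ : 0 < R),
            (ENNReal.ofReal (R^3))⁻¹ * ∫⁻ x in ball (0 : Ed d) R, usq u x)
      ≤ ENNReal.ofReal C * (nXstar (usq f)) ^ 2 := by
  -- `max 1` makes the constant visibly positive.
  refine ⟨max 1 (Sol.cL d γ η * Sol.cK d γ η ^ 2), lt_max_of_lt_left one_pos, ?_⟩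
  intro V V0 VC rep ε τ hε σ hσ u f hu iu ig ife heq
  have h := sol_of_complex hd hγ hη V0 VC rep hε hσ hu iu ig ife heq
  have hC : ENNReal.ofReal (max 1 (Sol.cL d γ η * Sol.cK d γ η ^ 2)) ≠ 0 := by simp
  rcases eq_or_ne (nXstar (usq f)) ⊤ with hF | hF
  · rw [hF, ENNReal.top_pow two_ne_zero, ENNReal.mul_top hC]
    exact le_top
  rw [usq_eq f] at hF ⊢
  rw [usq_eq u, gradSq_eq hu]
  refine (h.main hF).trans ?_
  gcongr
  exact le_max_right _ _
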